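/- arXiv:1705.09379 — 2 statements merged into one kernel-verified Lean document; each statement's English description precedes it below -/
import Mathlib

section
/- Let s ∈ ℂ ⊗ ℂ^d ⊗ ℂ^d be a 3-tensor with trivial first factor (i.e., essentially a matrix) and let t ∈ ℂ² ⊗ ℂⁿ ⊗ ℂᵐ be a matrix pencil. Then rank(t ⊠ s) = rank(t ⊗ s) = rank(t) · rank(s), where ⊠ is the tensor Kronecker product and ⊗ the tensor product. -/
open scoped BigOperators

universe u v

noncomputable section

variable {F : Type v}

/-- Tensor rank: the least `r` such that `T` is a sum of `r` simple tensors. -/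
def tRank {ι : Type*} [Fintype ι] [DecidableEq ι] {γ : ι → Type*} [∀ i, Fintype (γ i)]
    [Field F] (T : (∀ i, γ i) → F) : ℕ :=
  sInf {r | ∃ v : Fin r → ∀ i, γ i → F, ∀ x, T x = ∑ j, ∏ i, v j i (x i)}

/-- Tensor product of a `ι`-indexed tensor and a `κ`-indexed tensor (no grouping). -/
def tProd [Field F] {ι κ : Type*} {γ : ι → Type u} {δ : κ → Type u}
    (S : (∀ i, γ i) → F) (T : (∀ j, δ j) → F) : (∀ i : ι ⊕ κ, Sum.elim γ δ i) → F :=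
  fun x => S (fun i => x (Sum.inl i)) * T (fun j => x (Sum.inr j))

instance sumElimFintype {ι κ : Type*} {γ : ι → Type u} {δ : κ → Type u}
    [hγ : ∀ i, Fintype (γ i)] [hδ : ∀ j, Fintype (δ j)] :
    ∀ i : ι ⊕ κ, Fintype (Sum.elim γ δ i)
  | Sum.inl i => hγ i
  | Sum.inr j => hδ j

/-- Tensor Kronecker product of two tensors with the same index set. -/
def tKron [Field F] {ι : Type*} {γ δ : ι → Type*}
    (S : (∀ i, γ i) → F) (T : (∀ i, δ i) → F) : (∀ i, γ i × δ i) → F :=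
  fun x => S (fun i => (x i).1) * T (fun i => (x i).2)

/-- `n`-fold tensor product power of a tensor (no grouping), a tensor indexed by `Fin n × ι`. -/
def tPow [Field F] {ι : Type*} {γ : ι → Type*} (T : (∀ i, γ i) → F) (n : ℕ) :
    (∀ p : Fin n × ι, γ p.2) → F :=
  fun x => ∏ j : Fin n, T (fun i => x (j, i))

/-- Restriction `t ≥ s`: `s` is obtained from `t` by applying linear maps on each factor. -/
def Restricts [Field F] {ι : Type*} [Fintype ι] [DecidableEq ι]
    {γ : ι → Type*} {δ : ι → Type*} [∀ i, Fintype (γ i)]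
    (t : (∀ i, γ i) → F) (s : (∀ i, δ i) → F) : Prop :=
  ∃ A : ∀ i, δ i → γ i → F, ∀ x, (∑ y : ∀ i, γ i, (∏ i, A i (x i) (y i)) * t y) = s x

/-- Degeneration `t ⊵_d^e s` with approximation degree `d` and error degree `e`. -/
def Degen [Field F] {ι : Type*} [Fintype ι] [DecidableEq ι]
    {γ : ι → Type*} {δ : ι → Type*} [∀ i, Fintype (γ i)]
    (t : (∀ i, γ i) → F) (s : (∀ i, δ i) → F) (d e : ℕ) : Prop :=
  ∃ A : ∀ i, δ i → γ i → Polynomial F, ∃ s' : Fin e → ((∀ i, δ i) → F),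
    ∀ x, (∑ y : ∀ i, γ i, (∏ i, A i (x i) (y i)) * Polynomial.C (t y)) =
      Polynomial.C (s x) * Polynomial.X ^ d +
      ∑ j : Fin e, Polynomial.C (s' j x) * Polynomial.X ^ (d + 1 + (j : ℕ))

/-- The rank-`r` order-`k` unit tensor `⟨r⟩_k = ∑_j b_j^{⊗k}`. -/
def unitTensor (F : Type v) [Field F] (r k : ℕ) : (Fin k → Fin r) → F :=
  fun x => ∑ j : Fin r, ∏ i : Fin k, if x i = j then 1 else 0

/-- The tensor `W_k = ∑_{type(i)=(k-1,1)} b_{i₁} ⊗ ⋯ ⊗ b_{i_k}` in `(F²)^{⊗k}`. -/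
def Wtensor (F : Type v) [Field F] (k : ℕ) : (Fin k → Fin 2) → F :=
  fun x => if (∑ i, (x i : ℕ)) = 1 then 1 else 0

/-- `R^e(s)`: border rank with error degree at most `e`. -/
def errRank [Field F] {k : ℕ} {γ : Fin k → Type*} [∀ i, Fintype (γ i)]
    (e : ℕ) (s : (∀ i, γ i) → F) : ℕ :=
  sInf {r | ∃ d, Degen (unitTensor F r k) s d e}

/-- `R_d(s)`: border rank with approximation degree `d`. -/
def degRank [Field F] {k : ℕ} {γ : Fin k → Type*} [∀ i, Fintype (γ i)]
    (d : ℕ) (s : (∀ i, γ i) → F) : ℕ :=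
  sInf {r | ∃ e, Degen (unitTensor F r k) s d e}

/-- Border rank over ℂ: the least `r` such that `T` is a limit of tensors of rank `≤ r`. -/
def tBorderRank {ι : Type*} [Fintype ι] [DecidableEq ι] {γ : ι → Type*} [∀ i, Fintype (γ i)]
    (T : (∀ i, γ i) → ℂ) : ℕ :=
  sInf {r | T ∈ closure {T' : (∀ i, γ i) → ℂ | tRank T' ≤ r}}

end

namespace Pencil

open Module

/-- The pair `(A, B)` is a simultaneous combination of `R` rank-one maps. -/
def PR {V W : Type} [AddCommGroup V] [Module ℂ V] [AddCommGroup W] [Module ℂ W]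
    (A B : V →ₗ[ℂ] W) (R : ℕ) : Prop :=
  ∃ (a b : Fin R → ℂ) (φ : Fin R → Module.Dual ℂ V) (w : Fin R → W),
    (∀ x, A x = ∑ i, (a i * φ i x) • w i) ∧ (∀ x, B x = ∑ i, (b i * φ i x) • w i)

/-- The kernel vectors of `A` whose image under `B` lies in the range of `A`. -/
def K2 {V W : Type} [AddCommGroup V] [Module ℂ V] [AddCommGroup W] [Module ℂ W]
    (A B : V →ₗ[ℂ] W) : Submodule ℂ V :=
  LinearMap.ker A ⊓ (LinearMap.range A).comap B

section
variable {V W : Type} [AddCommGroup V] [Module ℂ V] [AddCommGroup W] [Module ℂ W]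

lemma mem_K2 {A B : V →ₗ[ℂ] W} {k : V} : k ∈ K2 A B ↔ A k = 0 ∧ ∃ y, A y = B k := by
  simp [K2]

lemma PR.mono {A B : V →ₗ[ℂ] W} {R S : ℕ} (h : PR A B R) (hRS : R ≤ S) : PR A B S := by
  obtain ⟨k, rfl⟩ := Nat.exists_eq_add_of_le hRS
  obtain ⟨a, b, φ, w, hA, hB⟩ := h
  refine ⟨Fin.append a 0, Fin.append b 0, Fin.append φ 0, Fin.append w 0, ?_, ?_⟩
  · intro x; simp [Fin.sum_univ_add, hA]
  · intro x; simp [Fin.sum_univ_add, hB]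

lemma PR.comp {V' W' : Type} [AddCommGroup V'] [Module ℂ V'] [AddCommGroup W'] [Module ℂ W']
    {A B : V →ₗ[ℂ] W} {R : ℕ} (h : PR A B R) (f : V' →ₗ[ℂ] V) (g : W →ₗ[ℂ] W') :
    PR (g ∘ₗ A ∘ₗ f) (g ∘ₗ B ∘ₗ f) R := by
  obtain ⟨a, b, φ, w, hA, hB⟩ := h
  refine ⟨a, b, fun i => φ i ∘ₗ f, fun i => g (w i), ?_, ?_⟩
  · intro x; simp [hA]
  · intro x; simp [hB]

lemma PR.lin {A B : V →ₗ[ℂ] W} {R : ℕ} (h : PR A B R) (p q p' q' : ℂ) :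
    PR (p • A + q • B) (p' • A + q' • B) R := by
  obtain ⟨a, b, φ, w, hA, hB⟩ := h
  refine ⟨fun i => p * a i + q * b i, fun i => p' * a i + q' * b i, φ, w, ?_, ?_⟩
  · intro x
    simp only [LinearMap.add_apply, LinearMap.smul_apply, hA, hB, Finset.smul_sum,
      ← Finset.sum_add_distrib, smul_smul, ← add_smul]
    exact Finset.sum_congr rfl fun i _ => by ring_nf
  · intro x
    simp only [LinearMap.add_apply, LinearMap.smul_apply, hA, hB, Finset.smul_sum,
      ← Finset.sum_add_distrib, smul_smul, ← add_smul]
    exact Finset.sum_congr rfl fun i _ => by ring_nf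

lemma PR.peel {A B : V →ₗ[ℂ] W} {R : ℕ} (h : Dual ℂ V) (x : V) (hx : h x ≠ 0)
    (z : W) (a₀ b₀ : ℂ) (hA : A x = a₀ • z) (hB : B x = b₀ • z)
    (H : PR (A ∘ₗ (LinearMap.ker h).subtype) (B ∘ₗ (LinearMap.ker h).subtype) R) :
    PR A B (R + 1) := by
  obtain ⟨a, b, φ, w, hA', hB'⟩ := H
  let pr : V →ₗ[ℂ] LinearMap.ker h :=
    LinearMap.codRestrict _ (LinearMap.id - ((h x)⁻¹ • h).smulRight x) (by
      intro y; simp; field_simp; simp)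
  have hpr : ∀ y, y = (pr y : V) + ((h x)⁻¹ * h y) • x := by
    intro y; simp [pr]
  refine ⟨Fin.cons a₀ a, Fin.cons b₀ b, Fin.cons ((h x)⁻¹ • h) (fun i => φ i ∘ₗ pr),
    Fin.cons z w, ?_, ?_⟩
  · intro y
    have := hA' (pr y)
    simp only [LinearMap.comp_apply, Submodule.subtype_apply] at this
    conv_lhs => rw [hpr y, map_add, map_smul, hA, this]
    simp [Fin.sum_univ_succ, smul_smul, add_comm, mul_comm]
  · intro y
    have := hB' (pr y)
    simp only [LinearMap.comp_apply, Submodule.subtype_apply] at this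
    conv_lhs => rw [hpr y, map_add, map_smul, hB, this]
    simp [Fin.sum_univ_succ, smul_smul, add_comm, mul_comm]

variable [FiniteDimensional ℂ V] [FiniteDimensional ℂ W]

lemma K2_map_le (A B : V →ₗ[ℂ] W) (H : Submodule ℂ V) :
    (K2 (A ∘ₗ H.subtype) (B ∘ₗ H.subtype)).map H.subtype ≤ K2 A B := by
  rintro _ ⟨k, hk, rfl⟩
  obtain ⟨h1, y, hy⟩ := mem_K2.1 hk
  exact mem_K2.2 ⟨h1, y, hy⟩

lemma K2_restrict_le (A B : V →ₗ[ℂ] W) (H : Submodule ℂ V) :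
    finrank ℂ (K2 (A ∘ₗ H.subtype) (B ∘ₗ H.subtype)) ≤ finrank ℂ (K2 A B) := by
  rw [← Submodule.finrank_map_subtype_eq]
  exact Submodule.finrank_mono (K2_map_le A B H)

lemma K2_restrict_lt (A B : V →ₗ[ℂ] W) (H : Submodule ℂ V) (k : V) (hk : k ∈ K2 A B)
    (h : k ∈ H → ∀ y ∈ H, A y ≠ B k) :
    finrank ℂ (K2 (A ∘ₗ H.subtype) (B ∘ₗ H.subtype)) < finrank ℂ (K2 A B) := by
  rw [← Submodule.finrank_map_subtype_eq]
  refine Submodule.finrank_lt_finrank_of_lt (lt_of_le_of_ne (K2_map_le A B H) ?_)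
  intro he
  rw [← he] at hk
  obtain ⟨k', hk', rfl⟩ := hk
  obtain ⟨h1, y, hy⟩ := mem_K2.1 hk'
  exact h k'.2 y y.2 hy

lemma finite_jump (A B : V →ₗ[ℂ] W) :
    {μ : ℂ | finrank ℂ (LinearMap.ker B) < finrank ℂ (LinearMap.ker (A - μ • B))}.Finite := by
  obtain ⟨V', hV'⟩ := Submodule.exists_isCompl (LinearMap.ker B)
  have hker : LinearMap.ker (B ∘ₗ V'.subtype) = ⊥ := by
    rw [LinearMap.ker_eq_bot']
    intro x hx
    have : (x : V) ∈ LinearMap.ker B ⊓ V' := ⟨hx, x.2⟩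
    rw [hV'.inf_eq_bot] at this
    exact Subtype.ext (by simpa using this)
  obtain ⟨L, hL⟩ := LinearMap.exists_leftInverse_of_injective _ hker
  have hL' : ∀ x : V', L (B x) = x := fun x => LinearMap.congr_fun hL x
  refine (Module.End.finite_hasEigenvalue (L ∘ₗ A ∘ₗ V'.subtype)).subset ?_
  intro μ hμ
  by_contra hne
  have hd : Disjoint (LinearMap.ker (A - μ • B)) V' := by
    rw [Submodule.disjoint_def]
    intro x hx hxV
    by_contra hx0
    apply hne
    refine Module.End.hasEigenvalue_of_hasEigenvector (x := ⟨x, hxV⟩) ⟨?_, ?_⟩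
    · rw [Module.End.mem_eigenspace_iff]
      have h1 : A x = μ • B x := by
        simpa [sub_eq_zero] using hx
      simp [h1, hL' ⟨x, hxV⟩]
    · simpa using hx0
  have h1 := Submodule.finrank_add_finrank_le_of_disjoint hd
  have h2 := Submodule.finrank_add_eq_of_isCompl hV'
  have hμ' : finrank ℂ (LinearMap.ker B) < finrank ℂ (LinearMap.ker (A - μ • B)) := hμ
  omega

end
section
open Polynomial

lemma matrix_poly_ker {n m : ℕ} (M : Matrix (Fin n) (Fin m) ℂ[X])
    (hM : ∀ μ : ℂ, ∃ v : Fin m → ℂ, v ≠ 0 ∧ (M.map (eval μ)).mulVec v = 0) :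
    ∃ x : Fin m → ℂ[X], M.mulVec x = 0 ∧ ∀ μ : ℂ, ∃ j, (x j).eval μ ≠ 0 := by
  classical
  -- a nonzero polynomial kernel vector
  obtain ⟨y, hy0, hy⟩ : ∃ y : Fin m → ℂ[X], y ≠ 0 ∧ M.mulVec y = 0 := by
    let K := FractionRing ℂ[X]
    let MK : Matrix (Fin n) (Fin m) K := M.map (algebraMap ℂ[X] K)
    by_cases hinj : LinearMap.ker (Matrix.toLin' MK) = ⊥
    · exfalso
      obtain ⟨L, hL⟩ := LinearMap.exists_leftInverse_of_injective _ hinj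
      let L' := LinearMap.toMatrix' L
      have hL' : L' * MK = 1 := by
        have := congrArg LinearMap.toMatrix' hL
        rwa [LinearMap.toMatrix'_comp, LinearMap.toMatrix'_toLin', LinearMap.toMatrix'_id] at this
      obtain ⟨d, hd⟩ := IsLocalization.exist_integer_multiples_of_finite
        (nonZeroDivisors ℂ[X]) (fun p : Fin m × Fin n => L' p.1 p.2)
      choose N hN using hd
      have hd0 : (d : ℂ[X]) ≠ 0 := nonZeroDivisors.coe_ne_zero d
      let NM : Matrix (Fin m) (Fin n) ℂ[X] := Matrix.of fun i j => N (i, j)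
      have hNM : NM * M = (d : ℂ[X]) • (1 : Matrix (Fin m) (Fin m) ℂ[X]) := by
        apply Matrix.map_injective (IsFractionRing.injective ℂ[X] K)
        have e1 : NM.map (algebraMap ℂ[X] K) = (d : ℂ[X]) • L' := by
          ext i j
          simpa [NM] using hN (i, j)
        change (algebraMap ℂ[X] K).mapMatrix (NM * M) = _
        have : (NM * M).map (algebraMap ℂ[X] K) = (d : ℂ[X]) • (1 : Matrix (Fin m) (Fin m) K) := by
          rw [Matrix.map_mul, e1, Matrix.smul_mul, hL']
        refine this.trans ?_
        ext i j
        by_cases hij : i = j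
        · subst hij
          simp only [Matrix.smul_apply, Matrix.one_apply_eq, Matrix.map_apply]
          rw [Algebra.smul_def, mul_one, smul_eq_mul, mul_one]
        · simp [hij]
      obtain ⟨μ, hμ⟩ : ∃ μ : ℂ, (d : ℂ[X]).eval μ ≠ 0 := by
        by_contra! hc
        exact hd0 (Polynomial.funext (by simpa using hc))
      obtain ⟨v, hv0, hv⟩ := hM μ
      apply hv0
      have h1 : (NM.map (eval μ)) * (M.map (eval μ)) = ((d : ℂ[X]).eval μ) • 1 := by
        have := congrArg (fun Q : Matrix (Fin m) (Fin m) ℂ[X] => Q.map (evalRingHom μ)) hNM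
        simp only [Matrix.map_mul] at this
        refine this.trans ?_
        ext i j
        by_cases hij : i = j
        · subst hij; simp
        · simp [hij]
      have h2 : ((d : ℂ[X]).eval μ) • v = 0 := by
        have := congrArg (fun Q : Matrix (Fin m) (Fin m) ℂ => Q.mulVec v) h1
        simp only [← Matrix.mulVec_mulVec, hv, Matrix.mulVec_zero, Matrix.smul_mulVec,
          Matrix.one_mulVec] at this
        exact this.symm
      exact (smul_eq_zero.1 h2).resolve_left hμ
    · obtain ⟨u, hu, hu0⟩ := (Submodule.ne_bot_iff _).1 hinj
      obtain ⟨d, hd⟩ := IsLocalization.exist_integer_multiples_of_finite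
        (nonZeroDivisors ℂ[X]) u
      choose y hy using hd
      have hd0 : (d : ℂ[X]) ≠ 0 := nonZeroDivisors.coe_ne_zero d
      refine ⟨y, ?_, ?_⟩
      · rintro rfl
        apply hu0
        ext j
        have := hy j
        simp only [Pi.zero_apply, map_zero] at this
        exact (smul_eq_zero.1 this.symm).resolve_left hd0
      · ext1 i
        apply IsFractionRing.injective ℂ[X] K
        have h1 : MK.mulVec u = 0 := by simpa using hu
        have h2 := congrFun h1 i
        simp only [Matrix.mulVec, dotProduct, MK, Matrix.map_apply, Pi.zero_apply] at h2 ⊢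
        rw [map_sum, map_zero]
        calc _ = ∑ j, (d : ℂ[X]) • (algebraMap ℂ[X] K (M i j) * u j) := by
              refine Finset.sum_congr rfl fun j _ => ?_
              rw [map_mul, hy, mul_smul_comm]
          _ = 0 := by rw [← Finset.smul_sum, h2, smul_zero]
  have hne : (Finset.univ : Finset (Fin m)).Nonempty := by
    obtain ⟨j, _⟩ := Function.ne_iff.1 hy0
    exact ⟨j, Finset.mem_univ _⟩
  obtain ⟨g, hg, hg1⟩ := Finset.extract_gcd y hne
  set D := Finset.univ.gcd y
  have hD : D ≠ 0 := by
    intro h0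
    apply hy0
    ext1 j
    rw [hg j (Finset.mem_univ _), h0, zero_mul]; rfl
  refine ⟨g, ?_, ?_⟩
  · have : y = D • g := by ext1 j; exact hg j (Finset.mem_univ _)
    rw [this, Matrix.mulVec_smul] at hy
    exact (smul_eq_zero.1 hy).resolve_left hD
  · intro μ
    by_contra! hc
    have : (X - C μ) ∣ Finset.univ.gcd g :=
      Finset.dvd_gcd fun j _ => dvd_iff_isRoot.2 (hc j)
    rw [hg1] at this
    exact not_isUnit_X_sub_C μ (isUnit_of_dvd_one this)

variable {V W : Type} [AddCommGroup V] [Module ℂ V] [AddCommGroup W] [Module ℂ W]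
variable [FiniteDimensional ℂ V] [FiniteDimensional ℂ W]

/-- Evaluation of a polynomial vector. -/
noncomputable def ev {m : ℕ} (b : Fin m → V) (x : Fin m → ℂ[X]) (μ : ℂ) : V :=
  ∑ j, (x j).eval μ • b j

lemma poly_ker (A B : V →ₗ[ℂ] W) (hk : ∀ μ : ℂ, LinearMap.ker (A - μ • B) ≠ ⊥) :
    ∃ (m : ℕ) (b : Fin m → V) (x : Fin m → ℂ[X]), ∀ μ : ℂ, ev b x μ ≠ 0 ∧
      A (ev b x μ) = μ • B (ev b x μ) ∧
      A (ev b (fun j => derivative (x j)) μ) =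
        B (ev b x μ) + μ • B (ev b (fun j => derivative (x j)) μ) := by
  let b := finBasis ℂ V
  let c := finBasis ℂ W
  let M : Matrix (Fin (finrank ℂ W)) (Fin (finrank ℂ V)) ℂ[X] := Matrix.of fun i j =>
    C (c.coord i (A (b j))) - X * C (c.coord i (B (b j)))
  obtain ⟨x, hx, hx0⟩ := matrix_poly_ker M (by
    intro μ
    obtain ⟨v, hv, hv0⟩ := (Submodule.ne_bot_iff _).1 (hk μ)
    refine ⟨b.repr v, ?_, ?_⟩
    · intro h
      exact hv0 (b.repr.map_eq_zero_iff.1 (DFunLike.coe_injective h))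
    · ext i
      have h1 : c.coord i ((A - μ • B) v) = 0 := by
        rw [LinearMap.mem_ker.1 hv, map_zero]
      rw [← b.sum_repr v] at h1
      simp only [map_sum, map_smul] at h1
      simp only [Matrix.mulVec, dotProduct, Matrix.map_apply, Pi.zero_apply]
      rw [← h1]
      refine Finset.sum_congr rfl fun j _ => ?_
      simp [M]; ring)
  have hrow : ∀ i, ∑ j, (C (c.coord i (A (b j))) - X * C (c.coord i (B (b j)))) * x j = 0 :=
    fun i => congrFun hx i
  refine ⟨_, b, x, fun μ => ⟨?_, ?_, ?_⟩⟩
  · intro h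
    obtain ⟨j, hj⟩ := hx0 μ
    exact hj (Fintype.linearIndependent_iff.1 b.linearIndependent _ h j)
  · apply c.ext_elem
    intro i
    have := congrArg (eval μ) (hrow i)
    simp only [eval_finsetSum, eval_mul, eval_sub, eval_C, eval_X, eval_zero, sub_mul,
      Finset.sum_sub_distrib, sub_eq_zero, Basis.coord_apply] at this
    simp only [ev, map_sum, map_smul, Finsupp.coe_finsetSum, Finset.sum_apply, Finsupp.smul_apply,
      smul_eq_mul, Finset.mul_sum]
    simp only [mul_comm, mul_left_comm, mul_assoc] at this ⊢
    exact this
  · apply c.ext_elem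
    intro i
    have := congrArg (fun p => eval μ (derivative p)) (hrow i)
    simp only [derivative_sum, derivative_mul, derivative_sub, derivative_C, derivative_X,
      eval_finsetSum, eval_mul, eval_sub, eval_add, eval_C, eval_X, eval_zero, eval_one,
      derivative_zero, Basis.coord_apply] at this
    rw [← sub_eq_zero, ← this]
    simp only [ev, map_sum, map_smul, map_add, Finsupp.coe_finsetSum, Finset.sum_apply,
      Finsupp.smul_apply, Finsupp.add_apply,
      smul_eq_mul, Finset.mul_sum, ← Finset.sum_sub_distrib, ← Finset.sum_add_distrib]
    exact Finset.sum_congr rfl fun j _ => by ring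

lemma exists_h {m : ℕ} (b : Fin m → V) (x : Fin m → ℂ[X]) (hx : ∀ μ, ev b x μ ≠ 0)
    (E : Set ℂ) (hE : E.Finite) (z : V) (hz : z ≠ 0) :
    ∃ h : Dual ℂ V, h z ≠ 0 ∧ (∀ μ ∈ E, h (ev b x μ) ≠ 0) ∧
      ∀ μ, h (ev b x μ) = 0 → h (ev b (fun j => derivative (x j)) μ) ≠ 0 := by
  classical
  let g : Dual ℂ V → ℂ[X] := fun h => ∑ j, C (h (b j)) * x j
  have hg : ∀ h μ, (g h).eval μ = h (ev b x μ) := by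
    intro h μ
    simp [g, ev, eval_finsetSum, mul_comm]
  have hg' : ∀ h μ, (derivative (g h)).eval μ = h (ev b (fun j => derivative (x j)) μ) := by
    intro h μ
    simp [g, ev, eval_finsetSum, mul_comm]
  obtain ⟨h₁, hh₁⟩ := Module.exists_dual_forall_apply_ne_zero (K := ℂ)
    (fun i : Bool => if i then z else ev b x 0) (by
      intro i; cases i <;> simp [hz, hx])
  have h1z : h₁ z ≠ 0 := by simpa using hh₁ true
  have h10 : h₁ (ev b x 0) ≠ 0 := by simpa using hh₁ false
  have hg1 : g h₁ ≠ 0 := by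
    intro h0
    apply h10
    rw [← hg, h0, eval_zero]
  obtain ⟨h₂, hh₂⟩ := Module.exists_dual_forall_apply_ne_zero (K := ℂ)
    (fun i : (g h₁).roots.toFinset => ev b x i) (fun i => hx _)
  have hcop : ∀ μ, (g h₁).eval μ = 0 → (g h₂).eval μ ≠ 0 := by
    intro μ h1
    rw [hg]
    exact hh₂ ⟨μ, by simp [hg1, h1]⟩
  set w : ℂ[X] := derivative (g h₁) * g h₂ - g h₁ * derivative (g h₂) with hw
  by_cases hw0 : w = 0
  · have hc : IsCoprime (g h₁) (g h₂) := by
      rw [isCoprime_iff_aeval_ne_zero_of_isAlgClosed ℂ ℂ]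
      intro a
      by_cases h1 : (g h₁).eval a = 0
      · right; simpa [coe_aeval_eq_eval] using hcop a h1
      · left; simpa [coe_aeval_eq_eval] using h1
    have hd : g h₁ ∣ derivative (g h₁) := by
      apply hc.dvd_of_dvd_mul_right
      rw [sub_eq_zero.1 (hw.symm.trans hw0)]
      exact dvd_mul_right _ _
    have hd0 : derivative (g h₁) = 0 := by
      by_contra hne
      by_cases hdeg : (g h₁).natDegree = 0
      · rw [natDegree_eq_zero] at hdeg
        obtain ⟨c, hc⟩ := hdeg
        exact hne (by rw [← hc, derivative_C])
      · exact not_dvd_of_natDegree_lt hne (natDegree_derivative_lt hdeg) hd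
    have hdeg := derivative_eq_zero.1 hd0
    obtain ⟨c, hc'⟩ := natDegree_eq_zero.1 hdeg
    have hnz : ∀ μ, h₁ (ev b x μ) ≠ 0 := by
      intro μ
      rw [← hg, ← hc', eval_C]
      rintro rfl
      exact hg1 (by rw [← hc', C_0])
    exact ⟨h₁, h1z, fun μ _ => hnz μ, fun μ h0 => absurd h0 (hnz μ)⟩
  · let bad : Set ℂ := (fun μ => -(g h₁).eval μ / (g h₂).eval μ) '' (E ∪ {μ | w.IsRoot μ}) ∪
      {-h₁ z / h₂ z}
    have hbad : bad.Finite :=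
      ((hE.union (finite_setOfPred_isRoot hw0)).image _).union (Set.finite_singleton _)
    obtain ⟨c, hc⟩ := hbad.infinite_compl.nonempty
    have key : ∀ μ ∈ E ∪ {μ | w.IsRoot μ}, (g h₁).eval μ + c * (g h₂).eval μ ≠ 0 := by
      intro μ hμ h0
      by_cases h2 : (g h₂).eval μ = 0
      · rw [h2, mul_zero, add_zero] at h0
        exact hcop μ h0 h2
      · apply hc
        left
        refine ⟨μ, hμ, ?_⟩
        change -(g h₁).eval μ / (g h₂).eval μ = c
        rw [div_eq_iff h2]; linear_combination -h0
    refine ⟨h₁ + c • h₂, ?_, ?_, ?_⟩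
    · intro h0
      have h0' : h₁ z + c * h₂ z = 0 := by simpa using h0
      by_cases h2 : h₂ z = 0
      · rw [h2, mul_zero, add_zero] at h0'
        exact h1z h0'
      · apply hc
        right
        change c = -h₁ z / h₂ z
        rw [eq_div_iff h2]; linear_combination h0'
    · intro μ hμ
      have := key μ (Or.inl hμ)
      rw [hg, hg] at this
      simpa using this
    · intro μ h0 h0'
      have e1 : (g h₁).eval μ + c * (g h₂).eval μ = 0 := by
        rw [hg, hg]; simpa using h0
      have e2 : (derivative (g h₁)).eval μ + c * (derivative (g h₂)).eval μ = 0 := by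
        rw [hg', hg']; simpa using h0'
      refine key μ (Or.inr ?_) e1
      change w.eval μ = 0
      rw [hw]
      simp only [eval_sub, eval_mul]
      linear_combination (g h₂).eval μ * e2 - (derivative (g h₂)).eval μ * e1

end
section
variable {V W : Type} [AddCommGroup V] [Module ℂ V] [AddCommGroup W] [Module ℂ W]
variable [FiniteDimensional ℂ V] [FiniteDimensional ℂ W]

lemma base_case (A B : V →ₗ[ℂ] W) (hB : Function.Bijective B)
    (hK : ∀ μ : ℂ, K2 (A - μ • B) B = ⊥) : PR A B (finrank ℂ W) := by
  let e := LinearEquiv.ofBijective B hB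
  let T : End ℂ V := e.symm.toLinearMap ∘ₗ A
  have hT : ∀ x, B (T x) = A x := fun x => e.apply_symm_apply (A x)
  let s : Set V := {x | ∃ μ : ℂ, T x = μ • x}
  have hs : Submodule.span ℂ s = ⊤ := by
    rw [eq_top_iff, ← Module.End.iSup_maxGenEigenspace_eq_top T]
    refine iSup_le fun μ x hx => Submodule.subset_span ⟨μ, ?_⟩
    rw [Module.End.mem_maxGenEigenspace] at hx
    obtain ⟨k, hk⟩ := hx
    induction k with
    | zero =>
      have : x = 0 := by simpa using hk
      simp [this]
    | succ k ih =>
      rcases Nat.eq_zero_or_pos k with rfl | hkpos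
      · simpa [sub_eq_zero] using hk
      apply ih
      have hval : ∀ u, B ((T - μ • (1 : End ℂ V)) u) = (A - μ • B) u := by
        intro u; simp [hT]
      have hmem : ((T - μ • (1 : End ℂ V)) ^ k) x ∈ K2 (A - μ • B) B := by
        rw [mem_K2]
        constructor
        · rw [← hval, ← Module.End.mul_apply, ← pow_succ', hk, map_zero]
        · obtain ⟨j, rfl⟩ := Nat.exists_eq_succ_of_ne_zero hkpos.ne'
          refine ⟨((T - μ • (1 : End ℂ V)) ^ j) x, ?_⟩
          rw [← hval, ← Module.End.mul_apply, ← pow_succ']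
      rw [hK] at hmem
      simpa using hmem
  obtain ⟨f, hf, hfs, hfi⟩ := Submodule.exists_fun_fin_finrank_span_eq ℂ s
  have hdim : finrank ℂ (Submodule.span ℂ s) = finrank ℂ W := by
    rw [hs, finrank_top, e.finrank_eq]
  let bb := Basis.mk hfi (by rw [hfs, hs])
  choose μ hμ using hf
  rw [← hdim]
  have hAf : ∀ i, A (f i) = μ i • B (f i) := by
    intro i; rw [← hT, hμ, map_smul]
  refine ⟨μ, fun _ => 1, fun i => bb.coord i, fun i => B (f i), ?_, ?_⟩
  · intro x
    conv_lhs => rw [← bb.sum_repr x]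
    simp [bb, hAf, smul_smul, mul_comm]
  · intro x
    conv_lhs => rw [← bb.sum_repr x]
    simp [bb]

lemma ker_map (B : V →ₗ[ℂ] W) (H : Submodule ℂ V) :
    (LinearMap.ker (B ∘ₗ H.subtype)).map H.subtype = LinearMap.ker B ⊓ H := by
  ext x
  simp only [Submodule.mem_map, LinearMap.mem_ker, Submodule.mem_inf]
  constructor
  · rintro ⟨y, hy, rfl⟩
    exact ⟨hy, y.2⟩
  · rintro ⟨h1, h2⟩
    exact ⟨⟨x, h2⟩, h1, rfl⟩

lemma ker_restrict_le (B : V →ₗ[ℂ] W) (H : Submodule ℂ V) :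
    finrank ℂ (LinearMap.ker (B ∘ₗ H.subtype)) ≤ finrank ℂ (LinearMap.ker B) := by
  rw [← Submodule.finrank_map_subtype_eq, ker_map]
  exact Submodule.finrank_mono inf_le_left

lemma ker_restrict_lt (B : V →ₗ[ℂ] W) (H : Submodule ℂ V) (z : V) (hz : B z = 0) (hzH : z ∉ H) :
    finrank ℂ (LinearMap.ker (B ∘ₗ H.subtype)) < finrank ℂ (LinearMap.ker B) := by
  rw [← Submodule.finrank_map_subtype_eq, ker_map]
  refine Submodule.finrank_lt_finrank_of_lt (lt_of_le_of_ne inf_le_left ?_)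
  intro h
  have : z ∈ LinearMap.ker B := hz
  rw [← h] at this
  exact hzH this.2

lemma finrank_ker_dual (h : Dual ℂ V) :
    finrank ℂ V ≤ finrank ℂ (LinearMap.ker h) + 1 := by
  have := LinearMap.finrank_range_add_finrank_ker h
  have h1 := Submodule.finrank_le (LinearMap.range h)
  rw [finrank_self] at h1
  omega

lemma ker_restrict_ge (B : V →ₗ[ℂ] W) (h : Dual ℂ V) :
    finrank ℂ (LinearMap.ker B) ≤
      finrank ℂ (LinearMap.ker (B ∘ₗ (LinearMap.ker h).subtype)) + 1 := by
  rw [← Submodule.finrank_map_subtype_eq (LinearMap.ker h), ker_map]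
  have h1 := Submodule.finrank_sup_add_finrank_inf_eq (LinearMap.ker B) (LinearMap.ker h)
  have h2 := Submodule.finrank_le (LinearMap.ker B ⊔ LinearMap.ker h)
  have h3 := finrank_ker_dual h
  omega

lemma dual_K2 (A B : V →ₗ[ℂ] W) (hB : Function.Injective B) (hK : K2 A B = ⊥) :
    finrank ℂ (K2 A.dualMap B.dualMap) + finrank ℂ V = finrank ℂ W := by
  let S : Submodule ℂ W := LinearMap.range A ⊔ (LinearMap.ker A).map B
  have h1 : K2 A.dualMap B.dualMap = S.dualAnnihilator := by
    ext ψ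
    rw [mem_K2]
    simp only [S, Submodule.dualAnnihilator_sup_eq, Submodule.mem_inf]
    rw [← LinearMap.ker_dualMap_eq_dualAnnihilator_range, LinearMap.mem_ker]
    refine and_congr Iff.rfl ?_
    have : (∃ y, A.dualMap y = B.dualMap ψ) ↔ B.dualMap ψ ∈ LinearMap.range A.dualMap := Iff.rfl
    rw [this, LinearMap.range_dualMap_eq_dualAnnihilator_ker]
    simp [Submodule.mem_dualAnnihilator]
  have h2 : Disjoint (LinearMap.range A) ((LinearMap.ker A).map B) := by
    rw [Submodule.disjoint_def]
    rintro _ ⟨y, hy⟩ ⟨k, hk, rfl⟩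
    have : k ∈ K2 A B := mem_K2.2 ⟨hk, y, hy⟩
    rw [hK] at this
    rw [(Submodule.mem_bot ℂ).1 this, map_zero]
  have h3 := Submodule.finrank_sup_add_finrank_inf_eq (LinearMap.range A) ((LinearMap.ker A).map B)
  rw [h2.eq_bot, finrank_bot,
    ← (Submodule.equivMapOfInjective B hB (LinearMap.ker A)).finrank_eq] at h3
  have h4 := LinearMap.finrank_range_add_finrank_ker A
  have h5 := Subspace.finrank_add_finrank_dualAnnihilator_eq S
  rw [h1]
  have h6 : finrank ℂ S = finrank ℂ (LinearMap.range A ⊔ (LinearMap.ker A).map B : Submodule ℂ W) := rfl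
  omega

lemma PR.of_dual {A B : V →ₗ[ℂ] W} {R : ℕ} (h : PR A.dualMap B.dualMap R) : PR A B R := by
  obtain ⟨a, b, φ, w, hA, hB⟩ := h
  refine ⟨a, b, w, fun i => (evalEquiv ℂ W).symm (φ i), ?_, ?_⟩
  · intro x
    rw [← sub_eq_zero, ← forall_dual_apply_eq_zero_iff ℂ]
    intro ψ
    have := LinearMap.congr_fun (hA ψ) x
    simp at this
    simp [this, sub_eq_zero, mul_comm, mul_left_comm, mul_assoc]
  · intro x
    rw [← sub_eq_zero, ← forall_dual_apply_eq_zero_iff ℂ]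
    intro ψ
    have := LinearMap.congr_fun (hB ψ) x
    simp at this
    simp [this, sub_eq_zero, mul_comm, mul_left_comm, mul_assoc]

end

/-- The upper bound for the rank of a pencil. -/
theorem upper (N : ℕ) : ∀ (V W : Type) [AddCommGroup V] [Module ℂ V] [AddCommGroup W] [Module ℂ W]
    [FiniteDimensional ℂ V] [FiniteDimensional ℂ W] (A B : V →ₗ[ℂ] W) (F : ℕ),
    2 * (finrank ℂ V + finrank ℂ W) + F + (if finrank ℂ V < finrank ℂ W then 1 else 0) ≤ N →
    finrank ℂ W + finrank ℂ (LinearMap.ker B) ≤ F →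
    (∀ μ : ℂ, finrank ℂ W + finrank ℂ (K2 (A - μ • B) B) ≤ F) →
    (∀ μ : ℂ, finrank ℂ (LinearMap.ker B) ≤ finrank ℂ (LinearMap.ker (A - μ • B))) →
    PR A B F := by
  induction N with
  | zero =>
    intro V W _ _ _ _ _ _ A B F hN _ _ _
    have hV : finrank ℂ V = 0 := by omega
    have := finrank_zero_iff.1 hV
    refine ⟨0, 0, 0, 0, ?_, ?_⟩ <;> intro x <;> simp [Subsingleton.elim x 0]
  | succ N IH =>
    intro V W _ _ _ _ _ _ A B F hN h1 h2 h3
    -- the peeling step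
    have step : ∀ (h : Dual ℂ V) (x : V), h x ≠ 0 → ∀ (z : W) (a₀ b₀ : ℂ),
        A x = a₀ • z → B x = b₀ • z →
        (LinearMap.ker B = ⊥ ∨ ∃ z, B z = 0 ∧ h z ≠ 0) →
        finrank ℂ W + finrank ℂ (LinearMap.ker (B ∘ₗ (LinearMap.ker h).subtype)) + 1 ≤ F →
        (∀ μ : ℂ, finrank ℂ W + finrank ℂ (K2 ((A - μ • B) ∘ₗ (LinearMap.ker h).subtype)
          (B ∘ₗ (LinearMap.ker h).subtype)) + 1 ≤ F) → PR A B F := by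
      intro h x hx z a₀ b₀ hA hB hk g1 g2
      obtain ⟨F', rfl⟩ : ∃ F', F = F' + 1 := ⟨F - 1, by omega⟩
      refine PR.peel h x hx z a₀ b₀ hA hB (IH _ _ _ _ _ ?_ ?_ ?_ ?_)
      · have hlt : finrank ℂ (LinearMap.ker h) < finrank ℂ V := by
          apply Submodule.finrank_lt
          intro ht
          exact hx (by rw [← LinearMap.mem_ker, ht]; trivial)
        split_ifs at hN ⊢ <;> omega
      · omega
      · intro μ
        have := g2 μ
        rw [LinearMap.sub_comp, LinearMap.smul_comp] at this
        omega
      · intro μ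
        rw [← LinearMap.smul_comp, ← LinearMap.sub_comp]
        rcases hk with hk | ⟨z, hz, hz'⟩
        · have := ker_restrict_le B (LinearMap.ker h)
          rw [hk, finrank_bot] at this
          omega
        · have e1 := ker_restrict_lt B (LinearMap.ker h) z hz hz'
          have e2 := ker_restrict_ge (A - μ • B) h
          have e3 := h3 μ
          omega
    have hfin := finite_jump A B
    rcases h1.lt_or_eq with h1' | h1'
    · -- slack at infinity
      let E : Set ℂ := {μ | finrank ℂ W + finrank ℂ (K2 (A - μ • B) B) = F}
      have hE : E.Finite := by
        refine hfin.subset fun μ hμ => ?_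
        have hμ' : finrank ℂ W + finrank ℂ (K2 (A - μ • B) B) = F := hμ
        have : finrank ℂ (K2 (A - μ • B) B) ≤ finrank ℂ (LinearMap.ker (A - μ • B)) :=
          Submodule.finrank_mono inf_le_left
        change finrank ℂ (LinearMap.ker B) < finrank ℂ (LinearMap.ker (A - μ • B))
        omega
      by_cases hEe : E = ∅
      · have h2' : ∀ μ : ℂ, finrank ℂ W + finrank ℂ (K2 (A - μ • B) B) ≤ F - 1 := by
          intro μ
          have : finrank ℂ W + finrank ℂ (K2 (A - μ • B) B) ≠ F := by
            intro hμ
            have : μ ∈ E := hμ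
            rw [hEe] at this
            exact this
          have := h2 μ
          omega
        refine (IH V W A B (F - 1) ?_ (by omega) h2' h3).mono (by omega)
        omega
      · have hne : ∀ μ : E, ∃ k ∈ K2 (A - (μ : ℂ) • B) B, k ≠ 0 := by
          rintro ⟨μ, hμ⟩
          have hμ' : finrank ℂ W + finrank ℂ (K2 (A - μ • B) B) = F := hμ
          apply (Submodule.ne_bot_iff _).1
          intro hb
          change K2 (A - μ • B) B = ⊥ at hb
          rw [hb, finrank_bot] at hμ'
          omega
        choose k hk hk0 using hne
        obtain ⟨z, hz0, hz⟩ : ∃ z : V, z ≠ 0 ∧ (LinearMap.ker B = ⊥ ∨ B z = 0) := by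
          obtain ⟨μ, hμ⟩ := Set.nonempty_iff_ne_empty.2 hEe
          by_cases hb : LinearMap.ker B = ⊥
          · exact ⟨k ⟨μ, hμ⟩, hk0 _, Or.inl hb⟩
          · obtain ⟨z, hz, hz0⟩ := (Submodule.ne_bot_iff _).1 hb
            exact ⟨z, hz0, Or.inr hz⟩
        have : Finite E := hE
        obtain ⟨h, hh⟩ := Module.exists_dual_forall_apply_ne_zero (K := ℂ)
          (fun i : Option E => i.elim z k) (by
            intro i; cases i
            · exact hz0
            · exact hk0 _)
        have hhz : h z ≠ 0 := hh none
        have hhk : ∀ μ : E, h (k μ) ≠ 0 := fun μ => hh (some μ)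
        obtain ⟨μ₀, hμ₀⟩ := Set.nonempty_iff_ne_empty.2 hEe
        refine step h (k ⟨μ₀, hμ₀⟩) (hhk _) (B (k ⟨μ₀, hμ₀⟩)) μ₀ 1 ?_ (by simp) ?_ ?_ ?_
        · have := (mem_K2.1 (hk ⟨μ₀, hμ₀⟩)).1
          simpa [sub_eq_zero] using this
        · rcases hz with hz | hz
          · exact Or.inl hz
          · exact Or.inr ⟨z, hz, hhz⟩
        · have := ker_restrict_le B (LinearMap.ker h)
          omega
        · intro μ
          by_cases hμ : μ ∈ E
          · have e1 := K2_restrict_lt (A - μ • B) B (LinearMap.ker h) (k ⟨μ, hμ⟩) (hk ⟨μ, hμ⟩)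
              (fun hc => absurd hc (hhk ⟨μ, hμ⟩))
            have e2 := h2 μ
            omega
          · have e1 := K2_restrict_le (A - μ • B) B (LinearMap.ker h)
            have e2 := h2 μ
            have e3 : finrank ℂ W + finrank ℂ (K2 (A - μ • B) B) ≠ F := hμ
            omega
    · by_cases hb : LinearMap.ker B = ⊥
      · -- `B` injective
        have hinj : Function.Injective B := LinearMap.ker_eq_bot.1 hb
        rw [hb, finrank_bot, add_zero] at h1'
        have hK : ∀ μ : ℂ, K2 (A - μ • B) B = ⊥ := by
          intro μ
          have := h2 μ
          exact Submodule.finrank_eq_zero.1 (by omega)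
        have hle := LinearMap.finrank_le_finrank_of_injective hinj
        rcases hle.lt_or_eq with hlt | heq
        · apply PR.of_dual
          have hkd : finrank ℂ (LinearMap.ker B.dualMap) + finrank ℂ V = finrank ℂ W := by
            rw [LinearMap.ker_dualMap_eq_dualAnnihilator_range]
            have e1 := Subspace.finrank_add_finrank_dualAnnihilator_eq (LinearMap.range B)
            rw [LinearMap.finrank_range_of_inj hinj] at e1
            omega
          have hsm : ∀ μ : ℂ, A.dualMap - μ • B.dualMap = (A - μ • B).dualMap := by
            intro μ; ext ψ x; simp
          refine IH _ _ _ _ _ ?_ ?_ ?_ ?_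
          · simp only [Subspace.dual_finrank_eq]
            rw [if_pos hlt] at hN
            rw [if_neg (by omega)]
            omega
          · rw [Subspace.dual_finrank_eq]; omega
          · intro μ
            rw [Subspace.dual_finrank_eq, hsm]
            have := dual_K2 (A - μ • B) B hinj (hK μ)
            omega
          · intro μ
            rw [hsm]
            have e1 := LinearMap.finrank_range_add_finrank_ker (A - μ • B).dualMap
            rw [LinearMap.finrank_range_dualMap_eq_finrank_range, Subspace.dual_finrank_eq] at e1
            have e2 := LinearMap.finrank_range_le (A - μ • B)
            omega
        · rw [← h1']
          exact base_case A B ((LinearMap.injective_iff_surjective_of_finrank_eq_finrank heq).1 hinj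
            |> fun hs => ⟨hinj, hs⟩) hK
      · -- the singular case
        obtain ⟨z, hz, hz0⟩ := (Submodule.ne_bot_iff _).1 hb
        have hz' : B z = 0 := hz
        have hkpos : 0 < finrank ℂ (LinearMap.ker B) := by
          rw [Nat.pos_iff_ne_zero]
          intro h0
          exact hb (Submodule.finrank_eq_zero.1 h0)
        obtain ⟨m, b, x, hx⟩ := poly_ker A B (by
          intro μ h0
          have := h3 μ
          rw [h0, finrank_bot] at this
          omega)
        obtain ⟨h, hhz, hhE, hhs⟩ := exists_h b x (fun μ => (hx μ).1) _ hfin z hz0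
        refine step h z hhz (A z) 1 0 (by simp) (by simp [hz']) (Or.inr ⟨z, hz', hhz⟩) ?_ ?_
        · have := ker_restrict_lt B (LinearMap.ker h) z hz' hhz
          omega
        · intro μ
          obtain ⟨_, hx1, hx2⟩ := hx μ
          set u := ev b x μ
          set u' := ev b (fun j => Polynomial.derivative (x j)) μ
          have hu1 : (A - μ • B) u = 0 := by simp [hx1]
          have hu2 : (A - μ • B) u' = B u := by simp [hx2]
          have huK : u ∈ K2 (A - μ • B) B := mem_K2.2 ⟨hu1, u', hu2⟩
          have e2 := h2 μ
          by_cases hu : h u = 0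
          · have hnE : ¬ finrank ℂ (LinearMap.ker B) < finrank ℂ (LinearMap.ker (A - μ • B)) :=
              fun hlt => hhE μ hlt hu
            have hle : K2 (A - μ • B) B ≤ LinearMap.ker (A - μ • B) := inf_le_left
            rcases hle.lt_or_eq with hlt | heq
            · have e3 := Submodule.finrank_lt_finrank_of_lt hlt
              have e1 := K2_restrict_le (A - μ • B) B (LinearMap.ker h)
              omega
            · by_cases hsub : LinearMap.ker (A - μ • B) ≤ LinearMap.ker h
              · have e1 := K2_restrict_lt (A - μ • B) B (LinearMap.ker h) u huK (by
                  intro _ y hy hyu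
                  have : u' - y ∈ LinearMap.ker (A - μ • B) := by
                    rw [LinearMap.mem_ker, map_sub, hu2, hyu, sub_self]
                  have h0 : h (u' - y) = 0 := hsub this
                  rw [map_sub, LinearMap.mem_ker.1 hy, sub_zero] at h0
                  exact hhs μ hu h0)
                omega
              · obtain ⟨k, hk, hkh⟩ := SetLike.not_le_iff_exists.1 hsub
                have e1 := K2_restrict_lt (A - μ • B) B (LinearMap.ker h) k (heq ▸ hk)
                  (fun hc => absurd hc hkh)
                omega
          · have e1 := K2_restrict_lt (A - μ • B) B (LinearMap.ker h) u huK
              (fun hc => absurd hc hu)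
            omega
section
variable {V W : Type} [AddCommGroup V] [Module ℂ V] [AddCommGroup W] [Module ℂ W]
variable [FiniteDimensional ℂ V] [FiniteDimensional ℂ W]

lemma rel_finrank {R : ℕ} (w : Fin R → W) (hw : ∀ y, ∃ c : Fin R → ℂ, ∑ i, c i • w i = y) :
    finrank ℂ W + finrank ℂ (LinearMap.ker (Fintype.linearCombination ℂ w)) = R := by
  have h := LinearMap.finrank_range_add_finrank_ker (Fintype.linearCombination ℂ w)
  have hs : LinearMap.range (Fintype.linearCombination ℂ w) = ⊤ := by
    rw [LinearMap.range_eq_top]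
    intro y
    obtain ⟨c, hc⟩ := hw y
    exact ⟨c, by simpa [Fintype.linearCombination_apply] using hc⟩
  rw [hs, finrank_top] at h
  simpa using h

lemma lower_K2 (A B : V →ₗ[ℂ] W) (c1 : ∀ x, A x = 0 → B x = 0 → x = 0)
    (c2 : ∀ w, ∃ x y, A x + B y = w) {R : ℕ} (h : PR A B R) :
    finrank ℂ W + finrank ℂ (K2 A B) ≤ R := by
  obtain ⟨a, b, φ, w, hA, hB⟩ := h
  have hrel := rel_finrank w (by
    intro y
    obtain ⟨x, x', rfl⟩ := c2 y
    refine ⟨fun i => a i * φ i x + b i * φ i x', ?_⟩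
    simp only [hA, hB, add_smul, Finset.sum_add_distrib])
  set Rel := LinearMap.ker (Fintype.linearCombination ℂ w) with hRel
  obtain ⟨g, hg⟩ := A.rangeRestrict.exists_rightInverse_of_surjective A.range_rangeRestrict
  have hg' : ∀ y : LinearMap.range A, A (g y) = y := fun y =>
    congrArg Subtype.val (LinearMap.congr_fun hg y)
  let σ : K2 A B →ₗ[ℂ] V := g ∘ₗ LinearMap.codRestrict (LinearMap.range A) (B ∘ₗ (K2 A B).subtype)
    (fun k => k.2.2)
  have hσ : ∀ k : K2 A B, A (σ k) = B k := fun k => hg' _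
  let K' : Submodule ℂ V := LinearMap.ker (LinearMap.pi fun i => a i • φ i)
  have hK' : ∀ v, v ∈ K' ↔ ∀ i, a i * φ i v = 0 := by
    intro v
    simp only [K', LinearMap.mem_ker, funext_iff, LinearMap.pi_apply, LinearMap.smul_apply,
      smul_eq_mul, Pi.zero_apply]
  have hK'A : ∀ v ∈ K', A v = 0 := by
    intro v hv
    rw [hA]
    exact Finset.sum_eq_zero fun i _ => by rw [(hK' v).1 hv i, zero_smul]
  obtain ⟨π, hπ⟩ := LinearMap.exists_leftInverse_of_injective K'.subtype K'.ker_subtype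
  have hπ' : ∀ v (hv : v ∈ K'), (π v : V) = v := fun v hv =>
    congrArg Subtype.val (LinearMap.congr_fun hπ ⟨v, hv⟩)
  let T1 : (K2 A B × LinearMap.ker A) →ₗ[ℂ] (Fin R → ℂ) := LinearMap.pi fun i =>
    (b i • φ i) ∘ₗ (K2 A B).subtype ∘ₗ LinearMap.fst ℂ _ _ -
      (a i • φ i) ∘ₗ (σ ∘ₗ LinearMap.fst ℂ _ _ + (LinearMap.ker A).subtype ∘ₗ LinearMap.snd ℂ _ _)
  have hT1 : ∀ k z i, T1 (k, z) i = b i * φ i k - a i * φ i (σ k + z) := by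
    intro k z i
    simp [T1]
  let T2 : (K2 A B × LinearMap.ker A) →ₗ[ℂ] V :=
    (K2 A B).subtype ∘ₗ LinearMap.fst ℂ _ _ +
      K'.subtype ∘ₗ π ∘ₗ (LinearMap.ker A).subtype ∘ₗ LinearMap.snd ℂ _ _
  have hT2 : ∀ k z, T2 (k, z) = (k : V) + (π z : V) := fun k z => rfl
  let T : (K2 A B × LinearMap.ker A) →ₗ[ℂ] Rel × LinearMap.ker A :=
    (LinearMap.codRestrict Rel T1 (by
      rintro ⟨k, z⟩
      rw [hRel, LinearMap.mem_ker, Fintype.linearCombination_apply]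
      simp only [hT1, sub_smul, Finset.sum_sub_distrib]
      rw [← hA, ← hB, map_add, hσ, LinearMap.mem_ker.1 z.2]
      simp)).prod
    (LinearMap.codRestrict (LinearMap.ker A) T2 (by
      rintro ⟨k, z⟩
      rw [LinearMap.mem_ker, hT2, map_add, (mem_K2.1 k.2).1, hK'A _ (π z).2, add_zero]))
  have hT : Function.Injective T := by
    rw [← LinearMap.ker_eq_bot, LinearMap.ker_eq_bot']
    rintro ⟨k, z⟩ h0
    have e1 : T1 (k, z) = 0 := congrArg (fun p => (p.1 : Fin R → ℂ)) h0
    have e2 : T2 (k, z) = 0 := congrArg (fun p => (p.2 : V)) h0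
    rw [hT2] at e2
    have hkK' : (k : V) ∈ K' := by
      rw [eq_neg_of_add_eq_zero_left e2]
      exact K'.neg_mem (π z).2
    have hk0 : (k : V) = 0 := by
      apply c1 _ (hK'A _ hkK')
      rw [hB]
      refine Finset.sum_eq_zero fun i _ => ?_
      by_cases ha : a i = 0
      · have := congrFun e1 i
        rw [hT1, ha, zero_mul, sub_zero] at this
        rw [this]; simp
      · have := (mul_eq_zero.1 ((hK' _).1 hkK' i)).resolve_left ha
        rw [this]; simp
    have hk0' : k = 0 := Subtype.ext hk0
    subst hk0'
    have hzK' : (z : V) ∈ K' := by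
      rw [hK']
      intro i
      have := congrFun e1 i
      rw [hT1] at this
      simpa using this
    have hz0 : (z : V) = 0 := by
      rw [← hπ' z hzK']
      simpa using e2
    have : z = 0 := Subtype.ext hz0
    rw [this]; rfl
  have := LinearMap.finrank_le_finrank_of_injective hT
  rw [finrank_prod, finrank_prod] at this
  omega

lemma lower_gen (A B : V →ₗ[ℂ] W) (c1 : ∀ x, A x = 0 → B x = 0 → x = 0)
    (c2 : ∀ w, ∃ x y, A x + B y = w) {R : ℕ} (h : PR A B R) :
    ∃ μ : ℂ, finrank ℂ W + finrank ℂ (LinearMap.ker (A - μ • B)) ≤ R := by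
  obtain ⟨a, b, φ, w, hA, hB⟩ := h
  have hrel := rel_finrank w (by
    intro y
    obtain ⟨x, x', rfl⟩ := c2 y
    refine ⟨fun i => a i * φ i x + b i * φ i x', ?_⟩
    simp only [hA, hB, add_smul, Finset.sum_add_distrib])
  obtain ⟨μ, hμ⟩ := (Set.finite_range fun i => a i / b i).infinite_compl.nonempty
  refine ⟨μ, ?_⟩
  let T1 : LinearMap.ker (A - μ • B) →ₗ[ℂ] (Fin R → ℂ) := LinearMap.pi fun i =>
    ((a i - μ * b i) • φ i) ∘ₗ (LinearMap.ker (A - μ • B)).subtype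
  have hT1 : ∀ k i, T1 k i = (a i - μ * b i) * φ i k := fun k i => rfl
  let T := LinearMap.codRestrict (LinearMap.ker (Fintype.linearCombination ℂ w)) T1 (by
    intro k
    rw [LinearMap.mem_ker, Fintype.linearCombination_apply]
    have := LinearMap.mem_ker.1 k.2
    rw [LinearMap.sub_apply, LinearMap.smul_apply, hA, hB, Finset.smul_sum,
      ← Finset.sum_sub_distrib] at this
    rw [← this]
    refine Finset.sum_congr rfl fun i _ => ?_
    rw [hT1, smul_smul, ← sub_smul]
    ring_nf)
  have hT : Function.Injective T := by
    rw [← LinearMap.ker_eq_bot, LinearMap.ker_eq_bot']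
    intro k h0
    have e1 : T1 k = 0 := congrArg Subtype.val h0
    have e2 : ∀ i, a i * φ i k = 0 ∧ b i * φ i k = 0 := by
      intro i
      have e3 := congrFun e1 i
      rw [hT1] at e3
      rcases mul_eq_zero.1 e3 with e4 | e4
      · by_cases hb : b i = 0
        · rw [hb] at e4 ⊢
          have : a i = 0 := by simpa using e4
          simp [this]
        · exfalso
          apply hμ
          refine ⟨i, ?_⟩
          change a i / b i = μ
          rw [div_eq_iff hb]; linear_combination e4
      · simp [e4]
    apply Subtype.ext
    apply c1
    · rw [hA]; exact Finset.sum_eq_zero fun i _ => by rw [(e2 i).1, zero_smul]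
    · rw [hB]; exact Finset.sum_eq_zero fun i _ => by rw [(e2 i).2, zero_smul]
  have := LinearMap.finrank_le_finrank_of_injective hT
  omega

lemma PR.sub_smul {A B : V →ₗ[ℂ] W} {R : ℕ} (h : PR A B R) (μ : ℂ) : PR (A - μ • B) B R := by
  have := h.lin 1 (-μ) 0 1
  simpa [sub_eq_add_neg] using this

lemma finrank_le_pi {r : ℕ} (S : Submodule ℂ V) (S' : Submodule ℂ (Fin r → V))
    (h : ∀ f : Fin r → V, (∀ i, f i ∈ S) → f ∈ S') : r * finrank ℂ S ≤ finrank ℂ S' := by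
  let T : (Fin r → S) →ₗ[ℂ] S' := LinearMap.codRestrict S' (S.subtype.compLeft (Fin r))
    (fun f => h _ fun i => (f i).2)
  have hT : Function.Injective T := by
    intro f g hfg
    ext i
    exact congrFun (congrArg Subtype.val hfg) i
  have := LinearMap.finrank_le_finrank_of_injective hT
  rwa [finrank_pi_fintype, Finset.sum_const, Finset.card_univ, Fintype.card_fin,
    smul_eq_mul] at this

lemma finrank_pi' (r : ℕ) : finrank ℂ (Fin r → V) = r * finrank ℂ V := by
  rw [finrank_pi_fintype, Finset.sum_const, Finset.card_univ, Fintype.card_fin, smul_eq_mul]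

lemma compLeft_sub (A B : V →ₗ[ℂ] W) (μ : ℂ) (r : ℕ) :
    A.compLeft (Fin r) - μ • B.compLeft (Fin r) = (A - μ • B).compLeft (Fin r) := by
  ext; simp

lemma lower_r (A B : V →ₗ[ℂ] W) (c1 : ∀ x, A x = 0 → B x = 0 → x = 0)
    (c2 : ∀ w, ∃ x y, A x + B y = w)
    (h3 : ∀ μ : ℂ, finrank ℂ (LinearMap.ker B) ≤ finrank ℂ (LinearMap.ker (A - μ • B)))
    {r R : ℕ} (h : PR (A.compLeft (Fin r)) (B.compLeft (Fin r)) R) :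
    r * (finrank ℂ W + finrank ℂ (LinearMap.ker B)) ≤ R ∧
    ∀ μ : ℂ, r * (finrank ℂ W + finrank ℂ (K2 (A - μ • B) B)) ≤ R := by
  have c1r : ∀ x, A.compLeft (Fin r) x = 0 → B.compLeft (Fin r) x = 0 → x = 0 := by
    intro x hA hB
    ext1 i
    exact c1 _ (congrFun hA i) (congrFun hB i)
  have c2r : ∀ w, ∃ x y, A.compLeft (Fin r) x + B.compLeft (Fin r) y = w := by
    intro w
    choose x y hxy using c2
    exact ⟨fun i => x (w i), fun i => y (w i), funext fun i => hxy (w i)⟩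
  constructor
  · obtain ⟨μ, hμ⟩ := lower_gen _ _ c1r c2r h
    have e1 := finrank_le_pi (r := r) (LinearMap.ker (A - μ • B))
      (LinearMap.ker (A.compLeft (Fin r) - μ • B.compLeft (Fin r))) (by
        intro f hf
        rw [compLeft_sub]
        exact funext fun i => hf i)
    rw [finrank_pi'] at hμ
    have e2 := Nat.mul_le_mul_left r (h3 μ)
    rw [mul_add]
    omega
  · intro μ
    have e0 := lower_K2 (A.compLeft (Fin r) - μ • B.compLeft (Fin r)) (B.compLeft (Fin r))
      (by
        intro x hx hB
        apply c1r x _ hB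
        simpa [hB] using hx)
      (by
        intro w
        obtain ⟨x, y, hxy⟩ := c2r w
        refine ⟨x, y + μ • x, ?_⟩
        rw [← hxy, LinearMap.sub_apply, LinearMap.smul_apply, map_add, map_smul]
        abel)
      (h.sub_smul μ)
    have e1 := finrank_le_pi (r := r) (K2 (A - μ • B) B)
      (K2 (A.compLeft (Fin r) - μ • B.compLeft (Fin r)) (B.compLeft (Fin r))) (by
        intro f hf
        rw [compLeft_sub, mem_K2]
        have hf' := fun i => mem_K2.1 (hf i)
        choose ha y hy using hf'
        exact ⟨funext fun i => ha i, y, funext fun i => hy i⟩)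
    rw [finrank_pi'] at e0
    rw [mul_add]
    omega

/-- The concise, generic-basis case of the main fact. -/
lemma main_concise (A B : V →ₗ[ℂ] W) (c1 : ∀ x, A x = 0 → B x = 0 → x = 0)
    (c2 : ∀ w, ∃ x y, A x + B y = w)
    (h3 : ∀ μ : ℂ, finrank ℂ (LinearMap.ker B) ≤ finrank ℂ (LinearMap.ker (A - μ • B))) :
    ∃ F, PR A B F ∧ ∀ r R, PR (A.compLeft (Fin r)) (B.compLeft (Fin r)) R → r * F ≤ R := by
  classical
  let P : ℕ → Prop := fun F => finrank ℂ W + finrank ℂ (LinearMap.ker B) ≤ F ∧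
    ∀ μ : ℂ, finrank ℂ W + finrank ℂ (K2 (A - μ • B) B) ≤ F
  have hP : ∃ F, P F := ⟨finrank ℂ W + finrank ℂ V,
    Nat.add_le_add_left (Submodule.finrank_le _) _,
    fun μ => Nat.add_le_add_left (Submodule.finrank_le _) _⟩
  have hF := Nat.find_spec hP
  refine ⟨Nat.find hP, upper _ V W A B _ le_rfl hF.1 hF.2 h3, ?_⟩
  intro r R h
  obtain ⟨l1, l2⟩ := lower_r A B c1 c2 h3 h
  rcases Nat.eq_zero_or_pos (Nat.find hP) with h0 | hpos
  · rw [h0]; simp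
  · have hn : ¬ P (Nat.find hP - 1) := Nat.find_min hP (by omega)
    have : Nat.find hP ≤ finrank ℂ W + finrank ℂ (LinearMap.ker B) ∨
        ∃ μ : ℂ, Nat.find hP ≤ finrank ℂ W + finrank ℂ (K2 (A - μ • B) B) := by
      by_contra! hc
      refine hn ⟨by omega, fun μ => ?_⟩
      have := hc.2 μ
      omega
    rcases this with h' | ⟨μ, h'⟩
    · exact (Nat.mul_le_mul_left r h').trans l1
    · exact (Nat.mul_le_mul_left r h').trans (l2 μ)

lemma compLeft_lin (A B : V →ₗ[ℂ] W) (p q : ℂ) (r : ℕ) :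
    (p • A + q • B).compLeft (Fin r) = p • A.compLeft (Fin r) + q • B.compLeft (Fin r) := by
  ext; simp

lemma main_concise' (A B : V →ₗ[ℂ] W) (c1 : ∀ x, A x = 0 → B x = 0 → x = 0)
    (c2 : ∀ w, ∃ x y, A x + B y = w) :
    ∃ F, PR A B F ∧ ∀ r R, PR (A.compLeft (Fin r)) (B.compLeft (Fin r)) R → r * F ≤ R := by
  let f : ℂ × ℂ → ℕ := fun p => finrank ℂ (LinearMap.ker (p.1 • A + p.2 • B))
  obtain ⟨⟨α, β⟩, hne, hmin⟩ := (measure f).wf.has_min {p | p ≠ 0} ⟨(1, 0), by simp⟩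
  have hmin' : ∀ γ δ : ℂ, (γ, δ) ≠ (0, 0) → finrank ℂ (LinearMap.ker (α • A + β • B)) ≤
      finrank ℂ (LinearMap.ker (γ • A + δ • B)) := fun γ δ h => not_lt.1 (hmin (γ, δ) h)
  obtain ⟨γ, δ, hdet⟩ : ∃ γ δ : ℂ, α * δ - β * γ ≠ 0 := by
    by_cases hα : α = 0
    · refine ⟨1, 0, ?_⟩
      intro h0
      apply hne
      have : β = 0 := by simpa using h0
      rw [hα, this]; rfl
    · exact ⟨0, 1, by simpa using hα⟩
  set D := α * δ - β * γ with hD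
  set A' := γ • A + δ • B with hA'
  set B' := α • A + β • B with hB'
  have eA : A = (-β / D) • A' + (δ / D) • B' := by
    have e1 : -β / D * γ + δ / D * α = 1 := by field_simp; rw [hD]; ring
    have e2 : -β / D * δ + δ / D * β = 0 := by ring
    calc A = (-β / D * γ + δ / D * α) • A + (-β / D * δ + δ / D * β) • B := by rw [e1, e2]; simp
      _ = _ := by rw [hA', hB']; module
  have eB : B = (α / D) • A' + (-γ / D) • B' := by
    have e1 : α / D * γ + -γ / D * α = 0 := by ring
    have e2 : α / D * δ + -γ / D * β = 1 := by field_simp; rw [hD]; ring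
    calc B = (α / D * γ + -γ / D * α) • A + (α / D * δ + -γ / D * β) • B := by rw [e1, e2]; simp
      _ = _ := by rw [hA', hB']; module
  obtain ⟨F, hF, hlow⟩ := main_concise A' B' (by
      intro x h1 h2
      apply c1
      · rw [eA]; simp [h1, h2]
      · rw [eB]; simp [h1, h2])
    (by
      intro w
      obtain ⟨x, y, hxy⟩ := c2 w
      refine ⟨(-β / D) • x + (α / D) • y, (δ / D) • x + (-γ / D) • y, ?_⟩
      rw [← hxy]
      conv_rhs => rw [eA, eB]
      simp only [LinearMap.add_apply, LinearMap.smul_apply, map_add, map_smul]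
      abel)
    (by
      intro μ
      have e : A' - μ • B' = (γ - μ * α) • A + (δ - μ * β) • B := by
        rw [hA', hB']; module
      rw [e]
      apply hmin'
      intro h0
      rw [Prod.mk.injEq] at h0
      apply hdet
      linear_combination α * h0.2 - β * h0.1)
  refine ⟨F, ?_, ?_⟩
  · have := hF.lin (-β / D) (δ / D) (α / D) (-γ / D)
    rwa [← eA, ← eB] at this
  · intro r R h
    apply hlow
    have := h.lin γ δ α β
    rwa [← compLeft_lin, ← compLeft_lin] at this

theorem main (A B : V →ₗ[ℂ] W) :
    ∃ F, PR A B F ∧ ∀ r R, PR (A.compLeft (Fin r)) (B.compLeft (Fin r)) R → r * F ≤ R := by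
  let D := LinearMap.ker A ⊓ LinearMap.ker B
  let W' := LinearMap.range A ⊔ LinearMap.range B
  let A1 : (V ⧸ D) →ₗ[ℂ] W' := D.liftQ
    (LinearMap.codRestrict W' A fun x => Submodule.mem_sup_left ⟨x, rfl⟩)
    (fun x hx => Subtype.ext hx.1)
  let B1 : (V ⧸ D) →ₗ[ℂ] W' := D.liftQ
    (LinearMap.codRestrict W' B fun x => Submodule.mem_sup_right ⟨x, rfl⟩)
    (fun x hx => Subtype.ext hx.2)
  have hA1 : ∀ x, (A1 (D.mkQ x) : W) = A x := fun x => rfl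
  have hB1 : ∀ x, (B1 (D.mkQ x) : W) = B x := fun x => rfl
  obtain ⟨F, hF, hlow⟩ := main_concise' A1 B1 (by
      intro x h1 h2
      obtain ⟨x, rfl⟩ := D.mkQ_surjective x
      have e1 : A x = 0 := by rw [← hA1, h1]; rfl
      have e2 : B x = 0 := by rw [← hB1, h2]; rfl
      exact (Submodule.Quotient.mk_eq_zero D).2 ⟨e1, e2⟩)
    (by
      rintro ⟨w, hw⟩
      obtain ⟨_, ⟨x, rfl⟩, _, ⟨y, rfl⟩, rfl⟩ := Submodule.mem_sup.1 hw
      exact ⟨D.mkQ x, D.mkQ y, Subtype.ext rfl⟩)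
  refine ⟨F, hF.comp D.mkQ W'.subtype, ?_⟩
  intro r R h
  apply hlow
  obtain ⟨s, hs⟩ := D.mkQ.exists_rightInverse_of_surjective D.range_mkQ
  obtain ⟨π, hπ⟩ := LinearMap.exists_leftInverse_of_injective W'.subtype W'.ker_subtype
  have hs' : ∀ x, D.mkQ (s x) = x := fun x => LinearMap.congr_fun hs x
  have hπ' : ∀ x : W', π x = x := fun x => LinearMap.congr_fun hπ x
  have := h.comp (s.compLeft (Fin r)) (π.compLeft (Fin r))
  have eA : (π.compLeft (Fin r)) ∘ₗ (A.compLeft (Fin r)) ∘ₗ (s.compLeft (Fin r)) =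
      A1.compLeft (Fin r) := by
    apply LinearMap.ext
    intro x
    funext i
    change π (A (s (x i))) = A1 (x i)
    rw [← hA1, hπ', hs']
  have eB : (π.compLeft (Fin r)) ∘ₗ (B.compLeft (Fin r)) ∘ₗ (s.compLeft (Fin r)) =
      B1.compLeft (Fin r) := by
    apply LinearMap.ext
    intro x
    funext i
    change π (B (s (x i))) = B1 (x i)
    rw [← hB1, hπ', hs']
  rwa [eA, eB] at this

end
section

/-- Full-rank factorization of a matrix, together with one-sided inverses. -/
theorem matrix_factor (d : ℕ) (M : Fin d → Fin d → ℂ) :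
    ∃ (r : ℕ) (U : Fin d → Fin r → ℂ) (V : Fin r → Fin d → ℂ)
      (P : Fin r → Fin d → ℂ) (Q : Fin d → Fin r → ℂ),
      (∀ p q, M p q = ∑ i, U p i * V i q) ∧
      (∀ a c, ∑ p, ∑ q, P a p * M p q * Q q c = if a = c then 1 else 0) := by
  classical
  let f : (Fin d → ℂ) →ₗ[ℂ] (Fin d → ℂ) := Matrix.mulVecLin (Matrix.of M)
  have hf : ∀ x p, f x p = ∑ q, M p q * x q := fun x p => rfl
  let b := Module.finBasis ℂ (LinearMap.range f)
  have hx : ∀ i, ∃ x, f x = (b i : Fin d → ℂ) := fun i => (b i).2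
  choose x hx using hx
  obtain ⟨π, hπ⟩ := LinearMap.exists_leftInverse_of_injective (LinearMap.range f).subtype
    (LinearMap.range f).ker_subtype
  have hπ' : ∀ y : LinearMap.range f, π y = y := fun y => LinearMap.congr_fun hπ y
  refine ⟨_, fun p i => (b i : Fin d → ℂ) p,
    fun i q => b.repr (f.rangeRestrict (Pi.single q 1)) i,
    fun a p => b.repr (π (Pi.single p 1)) a, fun q c => x c q, ?_, ?_⟩
  · intro p q
    have h1 := congrArg (fun z : LinearMap.range f => (z : Fin d → ℂ) p)
      (b.sum_repr (f.rangeRestrict (Pi.single q 1)))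
    have h2 : f (Pi.single q 1) p = M p q := by
      rw [hf]
      simp [Pi.single_apply]
    rw [← h2]
    refine Eq.trans h1.symm ?_
    simp only [Submodule.coe_sum, Finset.sum_apply, Submodule.coe_smul, Pi.smul_apply, smul_eq_mul]
    exact Finset.sum_congr rfl fun i _ => mul_comm _ _
  · intro a c
    have h1 : ∀ y : Fin d → ℂ, ∑ p, b.repr (π (Pi.single p 1)) a * y p = b.repr (π y) a := by
      intro y
      have := LinearMap.pi_apply_eq_sum_univ ((b.coord a) ∘ₗ π) y
      refine Eq.trans ?_ this.symm
      refine Finset.sum_congr rfl fun p _ => ?_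
      rw [smul_eq_mul, mul_comm]
      congr 1
      simp only [LinearMap.comp_apply, Module.Basis.coord_apply]
      congr 3
      funext j
      simp [Pi.single_apply, eq_comm]
    have h2 : ∀ p, ∑ q, b.repr (π (Pi.single p 1)) a * M p q * x c q =
        b.repr (π (Pi.single p 1)) a * (b c : Fin d → ℂ) p := by
      intro p
      rw [← hx, hf, Finset.mul_sum]
      exact Finset.sum_congr rfl fun q _ => mul_assoc _ _ _
    rw [Finset.sum_congr rfl fun p _ => h2 p, h1, hπ', b.repr_self, Finsupp.single_apply]
    simp [eq_comm]

theorem tRank_le {ι : Type*} [Fintype ι] [DecidableEq ι] {γ : ι → Type*} [∀ i, Fintype (γ i)]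
    (T : (∀ i, γ i) → ℂ) (R : ℕ) (v : Fin R → ∀ i, γ i → ℂ)
    (h : ∀ x, T x = ∑ j, ∏ i, v j i (x i)) : tRank T ≤ R :=
  Nat.sInf_le ⟨v, h⟩

theorem tRank_attained {ι : Type*} [Fintype ι] [DecidableEq ι] {γ : ι → Type*}
    [∀ i, Fintype (γ i)] (T : (∀ i, γ i) → ℂ) (R : ℕ) (v : Fin R → ∀ i, γ i → ℂ)
    (h : ∀ x, T x = ∑ j, ∏ i, v j i (x i)) :
    ∃ v : Fin (tRank T) → ∀ i, γ i → ℂ, ∀ x, T x = ∑ j, ∏ i, v j i (x i) :=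
  Nat.sInf_mem (s := {r | ∃ v : Fin r → ∀ i, γ i → ℂ, ∀ x, T x = ∑ j, ∏ i, v j i (x i)})
    ⟨R, v, h⟩

theorem exists_decomp {ι : Type*} [Fintype ι] [DecidableEq ι] [Nonempty ι] {γ : ι → Type*}
    [∀ i, Fintype (γ i)] (T : (∀ i, γ i) → ℂ) :
    ∃ v : Fin (tRank T) → ∀ i, γ i → ℂ, ∀ x, T x = ∑ j, ∏ i, v j i (x i) := by
  classical
  let e := Fintype.equivFin (∀ i, γ i)
  let i0 : ι := Classical.arbitrary ι
  refine tRank_attained T (Fintype.card (∀ i, γ i))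
    (fun l i g => (if e.symm l i = g then 1 else 0) * (if i = i0 then T (e.symm l) else 1)) ?_
  intro x
  rw [Finset.sum_eq_single (e x)]
  · simp
  · intro l _ hl
    have : ∃ i, e.symm l i ≠ x i := by
      by_contra hcon
      push Not at hcon
      exact hl (by rw [← funext hcon]; simp)
    obtain ⟨i, hi⟩ := this
    exact Finset.prod_eq_zero (Finset.mem_univ i) (by simp [hi])
  · simp

theorem tProd_decomp {ι κ : Type} [Fintype ι] [DecidableEq ι] [Fintype κ] [DecidableEq κ]
    {γ : ι → Type} {δ : κ → Type} [∀ i, Fintype (γ i)] [∀ i, Fintype (δ i)]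
    (S : (∀ i, γ i) → ℂ) (T : (∀ i, δ i) → ℂ) (p q : ℕ)
    (v : Fin p → ∀ i, γ i → ℂ) (hv : ∀ x, S x = ∑ j, ∏ i, v j i (x i))
    (w : Fin q → ∀ i, δ i → ℂ) (hw : ∀ x, T x = ∑ j, ∏ i, w j i (x i)) :
    ∃ u : Fin (p * q) → ∀ i, Sum.elim γ δ i → ℂ, ∀ x, tProd S T x = ∑ j, ∏ i, u j i (x i) := by
  refine ⟨fun l i => match i with
    | Sum.inl i => v (finProdFinEquiv.symm l).1 i
    | Sum.inr i => w (finProdFinEquiv.symm l).2 i, ?_⟩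
  intro x
  rw [← finProdFinEquiv.sum_comp, Fintype.sum_prod_type]
  simp only [Fintype.prod_sum_type, Equiv.symm_apply_apply]
  have h1 := hv (fun i => x (Sum.inl i))
  have h2 := hw (fun i => x (Sum.inr i))
  exact (congrArg₂ (· * ·) h1 h2).trans (Finset.sum_mul_sum _ _ _ _)

theorem tKron_le_tProd {ι : Type} [Fintype ι] [DecidableEq ι]
    {γ : ι → Type} {δ : ι → Type} [∀ i, Fintype (γ i)] [∀ i, Fintype (δ i)]
    (S : (∀ i, γ i) → ℂ) (T : (∀ i, δ i) → ℂ) (R : ℕ)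
    (u : Fin R → ∀ i, Sum.elim γ δ i → ℂ) (hu : ∀ x, tProd S T x = ∑ j, ∏ i, u j i (x i)) :
    tRank (tKron S T) ≤ R := by
  refine tRank_le _ R (fun j i y => u j (Sum.inl i) y.1 * u j (Sum.inr i) y.2) ?_
  intro x
  have := hu (fun i => match i with
    | Sum.inl i => (x i).1
    | Sum.inr i => (x i).2)
  refine Eq.trans ?_ (this.trans ?_)
  · rfl
  · refine Finset.sum_congr rfl fun j _ => ?_
    rw [Fintype.prod_sum_type, Finset.prod_mul_distrib]

/-- Build an index of a three-factor tensor. -/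
def idx {a b c : ℕ} (x : Fin a) (y : Fin b) (z : Fin c) : ∀ i : Fin 3, Fin (![a, b, c] i)
  | 0 => x
  | 1 => y
  | 2 => z

theorem idx_eta {a b c : ℕ} (x : ∀ i : Fin 3, Fin (![a, b, c] i)) :
    idx (x 0) (x 1) (x 2) = x := by
  funext i
  fin_cases i <;> rfl

/-- Build a simple three-factor tensor. -/
def vec {a b c : ℕ} (x : Fin a → ℂ) (y : Fin b → ℂ) (z : Fin c → ℂ) :
    ∀ i : Fin 3, Fin (![a, b, c] i) → ℂ
  | 0 => x
  | 1 => y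
  | 2 => z

theorem tRank_le3 {a b c : ℕ} (T : (∀ i : Fin 3, Fin (![a, b, c] i)) → ℂ) (R : ℕ)
    (u : Fin R → Fin a → ℂ) (v : Fin R → Fin b → ℂ) (w : Fin R → Fin c → ℂ)
    (h : ∀ x y z, T (idx x y z) = ∑ l, u l x * v l y * w l z) : tRank T ≤ R := by
  refine tRank_le T R (fun l => vec (u l) (v l) (w l)) ?_
  intro x
  have := h (x 0) (x 1) (x 2)
  refine (congrArg T (idx_eta x)).symm.trans (this.trans ?_)
  refine Finset.sum_congr rfl fun l _ => ?_
  rw [Fin.prod_univ_three]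
  rfl

theorem PR_of_slices {n m r R : ℕ} (A : (Fin m → ℂ) →ₗ[ℂ] (Fin n → ℂ))
    (B : (Fin m → ℂ) →ₗ[ℂ] (Fin n → ℂ)) (MA MB : Fin n → Fin m → ℂ)
    (hA : ∀ x j, A x j = ∑ k, MA j k * x k) (hB : ∀ x j, B x j = ∑ k, MB j k * x k)
    (a b : Fin R → ℂ) (u : Fin R → Fin n → Fin r → ℂ) (w : Fin R → Fin m → Fin r → ℂ)
    (h0 : ∀ j k p q, MA j k * (if p = q then 1 else 0) = ∑ l, a l * u l j p * w l k q)
    (h1 : ∀ j k p q, MB j k * (if p = q then 1 else 0) = ∑ l, b l * u l j p * w l k q) :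
    PR (A.compLeft (Fin r)) (B.compLeft (Fin r)) R := by
  have key : ∀ (A : (Fin m → ℂ) →ₗ[ℂ] (Fin n → ℂ)) (MA : Fin n → Fin m → ℂ)
      (_ : ∀ x j, A x j = ∑ k, MA j k * x k) (a : Fin R → ℂ)
      (_ : ∀ j k p q, MA j k * (if p = q then 1 else 0) = ∑ l, a l * u l j p * w l k q)
      (x : Fin r → Fin m → ℂ) (p : Fin r) (j : Fin n),
      A (x p) j = ∑ l, (a l * ∑ q, ∑ k, w l k q * x q k) * u l j p := by
    intro A MA hA a h0 x p j
    have e : ∀ l, (a l * ∑ q, ∑ k, w l k q * x q k) * u l j p =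
        ∑ q, ∑ k, (a l * u l j p * w l k q) * x q k := by
      intro l
      rw [Finset.mul_sum, Finset.sum_mul]
      refine Finset.sum_congr rfl fun q _ => ?_
      rw [Finset.mul_sum, Finset.sum_mul]
      exact Finset.sum_congr rfl fun k _ => by ring
    rw [Finset.sum_congr rfl fun l _ => e l, Finset.sum_comm]
    have e2 : ∀ q, ∑ l, ∑ k, (a l * u l j p * w l k q) * x q k =
        ∑ k, (MA j k * (if p = q then 1 else 0)) * x q k := by
      intro q
      rw [Finset.sum_comm]
      refine Finset.sum_congr rfl fun k _ => ?_
      rw [h0, Finset.sum_mul]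
    rw [Finset.sum_congr rfl fun q _ => e2 q, Finset.sum_eq_single p]
    · simp [hA]
    · intro q _ hq
      simp [hq.symm]
    · simp
  let φ : Fin R → Module.Dual ℂ (Fin r → Fin m → ℂ) := fun l =>
    { toFun := fun x => ∑ q, ∑ k, w l k q * x q k
      map_add' := fun x y => by simp [mul_add, Finset.sum_add_distrib]
      map_smul' := fun c x => by
        simp only [Pi.smul_apply, smul_eq_mul, RingHom.id_apply, Finset.mul_sum]
        exact Finset.sum_congr rfl fun q _ => Finset.sum_congr rfl fun k _ => by ring }
  refine ⟨a, b, φ, fun l p j => u l j p, ?_, ?_⟩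
  · intro x
    funext p j
    refine (key A MA hA a h0 x p j).trans ?_
    simp only [Finset.sum_apply, Pi.smul_apply, smul_eq_mul]
    rfl
  · intro x
    funext p j
    refine (key B MB hB b h1 x p j).trans ?_
    simp only [Finset.sum_apply, Pi.smul_apply, smul_eq_mul]
    rfl

theorem lower (d n m : ℕ)
    (s : (∀ i : Fin 3, Fin (![1, d, d] i)) → ℂ)
    (t : (∀ i : Fin 3, Fin (![2, n, m] i)) → ℂ) :
    tRank t * tRank s ≤ tRank (tKron t s) := by
  obtain ⟨v, hv⟩ := exists_decomp (tKron t s)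
  obtain ⟨r, U, V, P, Q, hM, hPQ⟩ := matrix_factor d (fun p q => s (idx 0 p q))
  have hs : tRank s ≤ r := by
    refine tRank_le3 s r (fun _ _ => 1) (fun i p => U p i) (fun i q => V i q) ?_
    intro x p q
    rw [Subsingleton.elim x 0, hM]
    simp
  let A : (Fin m → ℂ) →ₗ[ℂ] (Fin n → ℂ) :=
    Matrix.mulVecLin (Matrix.of fun j k => t (idx 0 j k))
  let B : (Fin m → ℂ) →ₗ[ℂ] (Fin n → ℂ) :=
    Matrix.mulVecLin (Matrix.of fun j k => t (idx 1 j k))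
  have hA : ∀ x j, A x j = ∑ k, t (idx 0 j k) * x k := fun x j => rfl
  have hB : ∀ x j, B x j = ∑ k, t (idx 1 j k) * x k := fun x j => rfl
  obtain ⟨F, ⟨a, b, φ, w, ha, hb⟩, hlow⟩ := main A B
  have ht : tRank t ≤ F := by
    refine tRank_le3 t F (fun l c => if c = 0 then a l else b l) w
      (fun l k => φ l (Pi.single k 1)) ?_
    intro c j k
    have hc : c = 0 ∨ c = 1 := by omega
    rcases hc with rfl | rfl
    · have h1 := congrFun (ha (Pi.single k 1)) j
      rw [hA] at h1
      simp only [Finset.sum_apply, Pi.smul_apply, smul_eq_mul, Pi.single_apply, mul_ite, mul_one,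
        mul_zero, Finset.sum_ite_eq', Finset.mem_univ, if_true] at h1
      rw [h1]
      refine Finset.sum_congr rfl fun l _ => ?_
      simp only [if_true]
      ring
    · have h1 := congrFun (hb (Pi.single k 1)) j
      rw [hB] at h1
      simp only [Finset.sum_apply, Pi.smul_apply, smul_eq_mul, Pi.single_apply, mul_ite, mul_one,
        mul_zero, Finset.sum_ite_eq', Finset.mem_univ, if_true] at h1
      rw [h1]
      refine Finset.sum_congr rfl fun l _ => ?_
      rw [if_neg (by decide)]
      ring
  let v0 : Fin (tRank (tKron t s)) → Fin 2 → ℂ := fun l c => v l 0 (c, (0 : Fin 1))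
  let v1 : Fin (tRank (tKron t s)) → Fin n → Fin d → ℂ := fun l j p => v l 1 (j, p)
  let v2 : Fin (tRank (tKron t s)) → Fin m → Fin d → ℂ := fun l k q => v l 2 (k, q)
  have hdec : ∀ (c : Fin 2) (j : Fin n) (k : Fin m) (p q : Fin d),
      t (idx c j k) * s (idx 0 p q) = ∑ l, v0 l c * v1 l j p * v2 l k q := by
    intro c j k p q
    refine Eq.trans ?_ ((hv (fun i => (idx c j k i, idx 0 p q i))).trans ?_)
    · rfl
    · refine Finset.sum_congr rfl fun l _ => ?_
      rw [Fin.prod_univ_three]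
      rfl
  have hcon : ∀ (c : Fin 2) (j : Fin n) (k : Fin m) (e f : Fin r),
      t (idx c j k) * (if e = f then 1 else 0) =
        ∑ l, v0 l c * (∑ p, P e p * v1 l j p) * (∑ q, v2 l k q * Q q f) := by
    intro c j k e f
    rw [← hPQ, Finset.mul_sum]
    have e1 : ∀ l, v0 l c * (∑ p, P e p * v1 l j p) * (∑ q, v2 l k q * Q q f) =
        ∑ p, ∑ q, P e p * (v0 l c * v1 l j p * v2 l k q) * Q q f := by
      intro l
      rw [mul_assoc, Finset.sum_mul_sum, Finset.mul_sum]
      refine Finset.sum_congr rfl fun p _ => ?_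
      rw [Finset.mul_sum]
      exact Finset.sum_congr rfl fun q _ => by ring
    rw [Finset.sum_congr rfl fun l _ => e1 l, Finset.sum_comm]
    refine Finset.sum_congr rfl fun p _ => ?_
    rw [Finset.sum_comm, Finset.mul_sum]
    refine Finset.sum_congr rfl fun q _ => ?_
    rw [← Finset.sum_mul, ← Finset.mul_sum, ← hdec]
    ring
  have hR := hlow r _ (PR_of_slices A B _ _ hA hB (fun l => v0 l 0) (fun l => v0 l 1)
    (fun l j e => ∑ p, P e p * v1 l j p) (fun l k f => ∑ q, v2 l k q * Q q f)
    (hcon 0) (hcon 1))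
  calc tRank t * tRank s ≤ F * r := Nat.mul_le_mul ht hs
    _ = r * F := mul_comm _ _
    _ ≤ _ := hR

end

end Pencil

/-- for `s ∈ ℂ ⊗ ℂ^d ⊗ ℂ^d` and a matrix pencil `t ∈ ℂ² ⊗ ℂⁿ ⊗ ℂᵐ`,
`rank(t ⊠ s) = rank(t ⊗ s) = rank(t)·rank(s)`. -/
theorem pencil_rank_mult (d n m : ℕ)
    (s : (∀ i : Fin 3, Fin (![1, d, d] i)) → ℂ)
    (t : (∀ i : Fin 3, Fin (![2, n, m] i)) → ℂ) :
    tRank (tKron t s) = tRank t * tRank s ∧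
    tRank (tProd t s) = tRank t * tRank s := by
  obtain ⟨v, hv⟩ := Pencil.exists_decomp t
  obtain ⟨w, hw⟩ := Pencil.exists_decomp s
  obtain ⟨u, hu⟩ := Pencil.tProd_decomp t s _ _ v hv w hw
  obtain ⟨u', hu'⟩ := Pencil.exists_decomp (tProd t s)
  have h1 := Pencil.tRank_le (tProd t s) _ u hu
  have h2 := Pencil.tKron_le_tProd t s _ u' hu'
  have h3 := Pencil.lower d n m s t
  exact ⟨le_antisymm (h2.trans h1) h3, le_antisymm h1 (h3.trans h2)⟩
end

section
/- If s ∈ ℂ²⊗ℂ²⊗ℂ² and t ∈ ℂ²⊗ℂ²⊗ℂ² are 3-tensors with rank(s ⊗ t) < rank(s)·rank(t), then both s and t are isomorphic (under GL₂×GL₂×GL₂ acting on the three factors) to the tensor W₃ = b₂⊗b₁⊗b₁ + b₁⊗b₂⊗b₁ + b₁⊗b₁⊗b₂. -/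
open scoped BigOperators

universe u v

/-- A 3-tensor in `(ℂ²)^{⊗3}` is isomorphic to `W₃` if invertible linear maps on the
three factors carry it to `W₃`. -/
def IsoW3 (s : (Fin 3 → Fin 2) → ℂ) : Prop :=
  ∃ A : Fin 3 → Matrix (Fin 2) (Fin 2) ℂ, (∀ i, IsUnit (A i).det) ∧
    ∀ x : Fin 3 → Fin 2,
      (∑ y : Fin 3 → Fin 2, (∏ i, A i (x i) (y i)) * s y) = Wtensor ℂ 3 x


namespace W3Proof
open Matrix Kronecker

/-- The square-zero matrix `1 ⊗ E₁₀`. -/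
def NN : Matrix (Fin 2 × Fin 2) (Fin 2 × Fin 2) ℂ := (1 : Matrix (Fin 2) (Fin 2) ℂ) ⊗ₖ !![0, 0; 1, 0]

lemma NN_sq : NN * NN = 0 := by
  unfold NN
  rw [← Matrix.mul_kronecker_mul]
  have : (!![0, 0; 1, 0] : Matrix (Fin 2) (Fin 2) ℂ) * !![0, 0; 1, 0] = 0 := by
    ext i j; fin_cases i <;> fin_cases j <;> simp
  rw [this]; simp

lemma exists_y (q : Fin 2 × Fin 2 → ℂ) :
    ∃ y : Fin 2 × Fin 2 → ℂ, q ⬝ᵥ y = 0 ∧ q ⬝ᵥ (NN *ᵥ y) = 0 ∧ NN *ᵥ y ≠ 0 := by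
  suffices h : ∃ a b c d : ℂ, q (0,0) * a + q (0,1) * b + q (1,0) * c + q (1,1) * d = 0 ∧
      q (0,1) * a + q (1,1) * c = 0 ∧ (a ≠ 0 ∨ c ≠ 0) by
    obtain ⟨a, b, c, d, h1, h2, h3⟩ := h
    refine ⟨fun p => !![a, b; c, d] p.1 p.2, ?_, ?_, ?_⟩
    · simp [dotProduct, Fintype.sum_prod_type]; linear_combination h1
    · simp [dotProduct, mulVec, NN, Fintype.sum_prod_type]; linear_combination h2
    · intro h
      have e1 := congrFun h (0,1)
      have e2 := congrFun h (1,1)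
      simp [dotProduct, mulVec, NN, Fintype.sum_prod_type] at e1 e2
      tauto
  by_cases h1 : q (0,1) = 0
  · by_cases h2 : q (1,1) = 0
    · by_cases h3 : q (0,0) = 0
      · exact ⟨1, 0, 0, 0, by simp [h3], by simp [h1], by simp⟩
      · exact ⟨q (1,0), 0, -q (0,0), 0, by ring, by simp [h1, h2], by simp [h3]⟩
    · refine ⟨1, 0, 0, -q (0,0) / q (1,1), by field_simp; ring, by simp [h1], by simp⟩
  · refine ⟨q (1,1), (-q (0,0) * q (1,1) + q (1,0) * q (0,1)) / q (0,1), -q (0,1), 0,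
      by field_simp; ring, by ring, by simp [h1]⟩

lemma core (r : ℕ) (hr : r ≤ 5) (A : Matrix (Fin 2 × Fin 2) (Fin r) ℂ)
    (B : Matrix (Fin r) (Fin 2 × Fin 2) ℂ) (d : Fin r → ℂ) (h1 : A * B = 1)
    (h2 : A * diagonal d * B = NN) : False := by
  have hrA : 4 ≤ A.rank := by
    have := Matrix.rank_mul_le_left A B
    rw [h1, Matrix.rank_one] at this
    simpa using this
  have hker : Module.finrank ℂ (LinearMap.ker A.mulVecLin) ≤ 1 := by
    have := LinearMap.finrank_range_add_finrank_ker A.mulVecLin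
    have h4 : Module.finrank ℂ (LinearMap.range A.mulVecLin) = A.rank := rfl
    simp at this
    omega
  obtain ⟨k, hk⟩ := finrank_le_one_iff.1 hker
  have hE : A * (diagonal d * B - B * NN) = 0 := by
    rw [Matrix.mul_sub, ← Matrix.mul_assoc, ← Matrix.mul_assoc, h1, h2]; simp
  have hcol : ∀ p, ∃ c : ℂ, ∀ j, (diagonal d * B - B * NN) j p = c * k.1 j := by
    intro p
    obtain ⟨c, hc⟩ := hk ⟨fun j => (diagonal d * B - B * NN) j p, by
      rw [LinearMap.mem_ker]
      ext i
      exact congrFun (congrFun hE i) p⟩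
    refine ⟨c, fun j => ?_⟩
    have := congrArg (fun z => z.1 j) hc
    simpa using this.symm
  choose q hq using hcol
  have hEy : ∀ y, q ⬝ᵥ y = 0 → (diagonal d * B) *ᵥ y = (B * NN) *ᵥ y := by
    intro y hy
    rw [← sub_eq_zero, ← Matrix.sub_mulVec]
    ext j
    simp only [mulVec, dotProduct, hq, Pi.zero_apply] at hy ⊢
    calc _ = k.1 j * ∑ x, q x * y x := by
          rw [Finset.mul_sum]; exact Finset.sum_congr rfl fun _ _ => by ring
      _ = 0 := by rw [hy, mul_zero]
  obtain ⟨y, y1, y2, y3⟩ := exists_y q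
  have e1 := hEy _ y1
  have e2 := hEy _ y2
  have e3 : (B * NN) *ᵥ (NN *ᵥ y) = 0 := by
    rw [Matrix.mulVec_mulVec, Matrix.mul_assoc, NN_sq]; simp
  rw [e3] at e2
  have e4 : B *ᵥ (NN *ᵥ y) = diagonal d *ᵥ (B *ᵥ y) := by
    rw [Matrix.mulVec_mulVec, Matrix.mulVec_mulVec, e1]
  rw [← Matrix.mulVec_mulVec, e4] at e2
  have e5 : B *ᵥ (NN *ᵥ y) = 0 := by
    rw [e4]
    ext j
    have := congrFun e2 j
    simp only [mulVec_diagonal, Pi.zero_apply, mul_eq_zero] at this ⊢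
    tauto
  apply y3
  rw [← Matrix.one_mulVec (NN *ᵥ y), ← h1, ← Matrix.mulVec_mulVec, e5]
  simp

lemma core2 (r : ℕ) (A : Matrix (Fin 2 × Fin 2) (Fin r) ℂ)
    (B : Matrix (Fin r) (Fin 2 × Fin 2) ℂ) (α β : Fin r → ℂ) (h1 : A * diagonal α * B = 1)
    (h2 : A * diagonal β * B = NN) : 6 ≤ r := by
  by_contra hr
  obtain ⟨c, hc⟩ := Infinite.exists_notMem_finset (Finset.univ.image fun j => - α j / β j)
  have hc' : ∀ j, α j + c * β j = 0 → β j = 0 := by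
    intro j hj
    by_contra hb
    apply hc
    simp only [Finset.mem_image, Finset.mem_univ, true_and]
    exact ⟨j, by field_simp; linear_combination -hj⟩
  have h3 : A * diagonal (fun j => α j + c * β j) * B = 1 + c • NN := by
    have : diagonal (fun j => α j + c * β j) = diagonal α + c • diagonal β := by
      ext i j; by_cases h : i = j <;> simp [diagonal, h]
    rw [this, Matrix.mul_add, Matrix.add_mul, h1, Matrix.mul_smul, Matrix.smul_mul, h2]
  refine core r (by omega) ((1 - c • NN) * A * diagonal (fun j => α j + c * β j)) B
    (fun j => β j / (α j + c * β j)) ?_ ?_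
  · rw [Matrix.mul_assoc _ A, Matrix.mul_assoc, h3, Matrix.sub_mul]
    simp [NN_sq, Matrix.mul_add]
  · rw [Matrix.mul_assoc _ (diagonal _) (diagonal _), Matrix.diagonal_mul_diagonal]
    have : (fun j => (α j + c * β j) * (β j / (α j + c * β j))) = β := by
      ext j
      by_cases h : α j + c * β j = 0
      · simp [hc' j h]
      · field_simp
    rw [this, Matrix.mul_assoc _ A, Matrix.mul_assoc, h2, Matrix.sub_mul]
    simp [NN_sq]

lemma KW (r : ℕ) (M : Matrix (Fin 2) (Fin 2) ℂ) (hM : M.det ≠ 0)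
    (X Y U V Z : Fin r → Fin 2 → ℂ)
    (h : ∀ a b a' b' c', M a b * Wtensor ℂ 3 ![a', b', c'] =
      ∑ j, X j a * Y j b * (U j a' * V j b' * Z j c')) : 6 ≤ r := by
  let A0 : Matrix (Fin 2 × Fin 2) (Fin r) ℂ := Matrix.of fun p j => X j p.1 * U j p.2
  let B0 : Matrix (Fin r) (Fin 2 × Fin 2) ℂ := Matrix.of fun j p => Y j p.1 * V j p.2
  have hh : ∀ c, A0 * diagonal (fun j => Z j c) * B0 =
      M ⊗ₖ (Matrix.of fun a' b' => Wtensor ℂ 3 ![a', b', c]) := by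
    intro c
    ext ⟨a, a'⟩ ⟨b, b'⟩
    rw [Matrix.mul_apply]
    simp only [Matrix.mul_diagonal, Matrix.kroneckerMap_apply, Matrix.of_apply, h, A0, B0]
    exact Finset.sum_congr rfl fun _ _ => by ring
  have hu : IsUnit M.det := isUnit_iff_ne_zero.2 hM
  refine core2 r ((M⁻¹ ⊗ₖ !![0, 1; 1, 0]) * A0) B0 (fun j => Z j 0) (fun j => Z j 1) ?_ ?_
  · rw [Matrix.mul_assoc, Matrix.mul_assoc, ← Matrix.mul_assoc A0, hh, ← Matrix.mul_kronecker_mul,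
      Matrix.nonsing_inv_mul _ hu]
    rw [← Matrix.one_kronecker_one]
    congr 1
    ext i j; fin_cases i <;> fin_cases j <;> simp [Wtensor, Matrix.mul_apply, Fin.sum_univ_succ]
  · rw [Matrix.mul_assoc, Matrix.mul_assoc, ← Matrix.mul_assoc A0, hh, ← Matrix.mul_kronecker_mul,
      Matrix.nonsing_inv_mul _ hu]
    unfold NN
    congr 1
    ext i j; fin_cases i <;> fin_cases j <;> simp [Wtensor, Matrix.mul_apply, Fin.sum_univ_succ]

lemma K22 (r : ℕ) (M N : Matrix (Fin 2) (Fin 2) ℂ) (hM : M.det ≠ 0) (hN : N.det ≠ 0)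
    (X Y U V : Fin r → Fin 2 → ℂ)
    (h : ∀ a b a' b', M a b * N a' b' = ∑ j, X j a * Y j b * (U j a' * V j b')) : 4 ≤ r := by
  let A0 : Matrix (Fin 2 × Fin 2) (Fin r) ℂ := Matrix.of fun p j => X j p.1 * U j p.2
  let B0 : Matrix (Fin r) (Fin 2 × Fin 2) ℂ := Matrix.of fun j p => Y j p.1 * V j p.2
  have hh : A0 * B0 = M ⊗ₖ N := by
    ext ⟨a, a'⟩ ⟨b, b'⟩
    rw [Matrix.mul_apply]
    simp only [Matrix.kroneckerMap_apply, Matrix.of_apply, h, A0, B0]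
    exact Finset.sum_congr rfl fun _ _ => by ring
  have hu : IsUnit (M ⊗ₖ N) := by
    rw [Matrix.isUnit_iff_isUnit_det, Matrix.det_kronecker, isUnit_iff_ne_zero]
    positivity
  have h1 := Matrix.rank_of_isUnit _ hu
  have h2 := Matrix.rank_mul_le_left A0 B0
  have h3 := Matrix.rank_le_card_width A0
  rw [hh, h1] at h2
  simp at h2 h3
  omega

lemma fin2 (i : Fin 2) : i = 0 ∨ i = 1 := by fin_cases i <;> simp

lemma sing (M : Fin 2 → Fin 2 → ℂ) (h : M 0 0 * M 1 1 - M 0 1 * M 1 0 = 0) :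
    ∃ u v : Fin 2 → ℂ, ∀ a b, M a b = u a * v b := by
  have key : ∀ a b a' b', M a b * M a' b' = M a b' * M a' b := by
    intro a b a' b'
    rcases fin2 a with rfl | rfl <;> rcases fin2 b with rfl | rfl <;>
      rcases fin2 a' with rfl | rfl <;> rcases fin2 b' with rfl | rfl <;>
      first | ring1 | linear_combination h | linear_combination -h
  by_cases hz : ∃ i j, M i j ≠ 0
  · obtain ⟨i, j, hij⟩ := hz
    refine ⟨fun a => M a j, fun b => M i b / M i j, fun a b => ?_⟩
    field_simp
    linear_combination key a b i j
  · push Not at hz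
    exact ⟨0, 0, fun a b => by simp [hz]⟩

lemma exists_root (P Q : Fin 2 → Fin 2 → ℂ) (hP : P 0 0 * P 1 1 - P 0 1 * P 1 0 ≠ 0) :
    ∃ μ : ℂ, (Q 0 0 - μ * P 0 0) * (Q 1 1 - μ * P 1 1)
      - (Q 0 1 - μ * P 0 1) * (Q 1 0 - μ * P 1 0) = 0 := by
  set D := P 0 0 * P 1 1 - P 0 1 * P 1 0
  set b := -(P 0 0 * Q 1 1 + P 1 1 * Q 0 0 - P 0 1 * Q 1 0 - P 1 0 * Q 0 1) with hb
  set c := Q 0 0 * Q 1 1 - Q 0 1 * Q 1 0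
  obtain ⟨z, hz⟩ := IsAlgClosed.exists_pow_nat_eq (discrim D b c) (n := 2) (by norm_num)
  obtain ⟨x, hx⟩ := exists_quadratic_eq_zero hP ⟨z, by rw [← hz]; ring⟩
  refine ⟨x, ?_⟩
  rw [← hx]
  simp only [D, b, c]; ring

lemma L (g : Fin 2 → Fin 2 → Fin 2 → ℂ) (f : Fin 2 → ℂ)
    (hf : (Matrix.of fun a b => ∑ c, f c * g a b c).det ≠ 0) :
    (∃ p q w : Fin 2 → Fin 2 → ℂ, ∀ a b c, g a b c = ∑ j, p j a * q j b * w j c) ∨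
    ((∃ p q w : Fin 3 → Fin 2 → ℂ, ∀ a b c, g a b c = ∑ j, p j a * q j b * w j c) ∧
      ∃ A B C : Matrix (Fin 2) (Fin 2) ℂ, IsUnit A.det ∧ IsUnit B.det ∧ IsUnit C.det ∧
        ∀ x y z, ∑ a, ∑ b, ∑ c, A x a * B y b * C z c * g a b c = Wtensor ℂ 3 ![x, y, z]) := by
  set P : Fin 2 → Fin 2 → ℂ := fun a b => ∑ c, f c * g a b c with hPdef
  have hP : P 0 0 * P 1 1 - P 0 1 * P 1 0 ≠ 0 := by
    rw [Matrix.det_fin_two] at hf; exact hf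
  obtain ⟨e, he⟩ : ∃ e : Fin 2 → ℂ, f 0 * e 1 - f 1 * e 0 ≠ 0 := by
    by_cases h0 : f 0 = 0
    · by_cases h1 : f 1 = 0
      · exfalso; apply hP; simp [hPdef, h0, h1]
      · exact ⟨![1, 0], by simp [h1]⟩
    · exact ⟨![0, 1], by simp [h0]⟩
  obtain ⟨μ, hμ⟩ := exists_root P (fun a b => ∑ c, e c * g a b c) hP
  obtain ⟨f', hf'⟩ : ∃ f' : Fin 2 → ℂ, f' = fun c => e c - μ * f c := ⟨_, rfl⟩
  set Q : Fin 2 → Fin 2 → ℂ := fun a b => ∑ c, f' c * g a b c with hQdef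
  have hQ : Q 0 0 * Q 1 1 - Q 0 1 * Q 1 0 = 0 := by
    rw [← hμ]
    simp only [hQdef, hPdef, hf', Fin.sum_univ_two]; ring
  have hΔ : f 0 * f' 1 - f 1 * f' 0 ≠ 0 := by
    intro h; apply he; rw [← h, hf']; ring
  obtain ⟨h0, h1, hg⟩ : ∃ h0 h1 : Fin 2 → ℂ, ∀ a b c, g a b c = h0 c * P a b + h1 c * Q a b := by
    obtain ⟨D, hD⟩ : ∃ D, D = f 0 * f' 1 - f 1 * f' 0 := ⟨_, rfl⟩
    have hD0 : D ≠ 0 := by rwa [hD]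
    refine ⟨fun c => ![f' 1, -f' 0] c / D, fun c => ![-f 1, f 0] c / D, fun a b c => ?_⟩
    simp only [hQdef, hPdef, Fin.sum_univ_two]
    rcases fin2 c with rfl | rfl <;> simp <;> field_simp <;> rw [hD] <;> ring
  obtain ⟨u, v, huv⟩ := sing Q hQ
  by_cases hT : P 0 0 * Q 1 1 + P 1 1 * Q 0 0 - P 0 1 * Q 1 0 - P 1 0 * Q 0 1 = 0
  swap
  · left
    obtain ⟨lam, hlam⟩ : ∃ lam, lam = (P 0 0 * P 1 1 - P 0 1 * P 1 0) /
      (P 0 0 * Q 1 1 + P 1 1 * Q 0 0 - P 0 1 * Q 1 0 - P 1 0 * Q 0 1) := ⟨_, rfl⟩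
    have hl : P 0 0 * P 1 1 - P 0 1 * P 1 0 -
        lam * (P 0 0 * Q 1 1 + P 1 1 * Q 0 0 - P 0 1 * Q 1 0 - P 1 0 * Q 0 1) = 0 := by
      rw [hlam]; field_simp; ring
    obtain ⟨u', v', huv'⟩ := sing (fun a b => P a b - lam * Q a b) (by
      linear_combination hl + lam ^ 2 * hQ)
    refine ⟨![u, u'], ![v, v'], ![fun c => lam * h0 c + h1 c, h0], fun a b c => ?_⟩
    simp only [Fin.sum_univ_two, Matrix.cons_val_zero, Matrix.cons_val_one]
    rw [← huv, ← huv', hg]; ring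
  by_cases hv : v = 0
  · left
    refine ⟨fun j a => P a j, fun j b => if j = b then 1 else 0, fun _ => h0, fun a b c => ?_⟩
    rw [hg, huv, hv]
    simp [mul_comm]
  by_cases hu : u = 0
  · left
    refine ⟨fun j a => P a j, fun j b => if j = b then 1 else 0, fun _ => h0, fun a b c => ?_⟩
    rw [hg, huv, hu]
    simp [mul_comm]
  right
  constructor
  · refine ⟨![fun a => P a 0, fun a => P a 1, u], ![![1, 0], ![0, 1], v], ![h0, h0, h1],
      fun a b c => ?_⟩
    rw [hg, huv]
    fin_cases b <;> simp [Fin.sum_univ_three] <;> ring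
  obtain ⟨y, hy⟩ : ∃ y : Fin 2 → ℂ, v 0 * y 0 + v 1 * y 1 = 1 := by
    by_cases h0 : v 0 = 0
    · have h1 : v 1 ≠ 0 := fun h1 => hv (by ext i; fin_cases i <;> simp [h0, h1])
      exact ⟨![0, 1 / v 1], by simp [h1]⟩
    · exact ⟨![1 / v 0, 0], by simp [h0]⟩
  obtain ⟨w, hw0, hw1⟩ : ∃ w : Fin 2 → ℂ, P 0 0 * w 0 + P 0 1 * w 1 = u 0 ∧
      P 1 0 * w 0 + P 1 1 * w 1 = u 1 := by
    obtain ⟨D, hD⟩ : ∃ D, D = P 0 0 * P 1 1 - P 0 1 * P 1 0 := ⟨_, rfl⟩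
    have hD0 : D ≠ 0 := by rwa [hD]
    refine ⟨![(P 1 1 * u 0 - P 0 1 * u 1) / D, (P 0 0 * u 1 - P 1 0 * u 0) / D], ?_, ?_⟩ <;>
    simp only [Matrix.cons_val_zero, Matrix.cons_val_one] <;> field_simp <;> rw [hD] <;> ring
  have hvw : v 0 * w 0 + v 1 * w 1 = 0 := by
    simp only [huv] at hT
    have : (P 0 0 * P 1 1 - P 0 1 * P 1 0) * (v 0 * w 0 + v 1 * w 1) = 0 := by
      rw [← hw0, ← hw1] at hT
      linear_combination hT
    exact (mul_eq_zero.1 this).resolve_left hP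
  have hdet : y 0 * w 1 - y 1 * w 0 ≠ 0 := by
    intro h
    have w0 : w 0 = 0 := by linear_combination -w 0 * hy + y 0 * hvw - v 1 * h
    have w1 : w 1 = 0 := by linear_combination -w 1 * hy + y 1 * hvw + v 0 * h
    apply hu
    ext i; fin_cases i
    · simp [← hw0, w0, w1]
    · simp [← hw1, w0, w1]
  obtain ⟨G, hG⟩ : ∃ G : Matrix (Fin 2) (Fin 2) ℂ, G = Matrix.of P * !![w 0, y 0; w 1, y 1] :=
    ⟨_, rfl⟩
  have hGd : IsUnit G.det := by
    rw [isUnit_iff_ne_zero, hG, Matrix.det_mul, Matrix.det_fin_two, Matrix.det_fin_two]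
    refine mul_ne_zero hP ?_
    simp only [Matrix.of_apply, Matrix.cons_val_zero, Matrix.cons_val_one, Matrix.cons_val']
    intro h; apply hdet; linear_combination -h
  have hGG := Matrix.nonsing_inv_mul _ hGd
  refine ⟨G⁻¹, !![y 0, y 1; w 0, w 1], !![f 0, f 1; f' 0, f' 1], ?_, ?_, ?_, ?_⟩
  · rw [Matrix.det_nonsing_inv]; simpa using hGd
  · rw [isUnit_iff_ne_zero, Matrix.det_fin_two]; simpa using hdet
  · rw [isUnit_iff_ne_zero, Matrix.det_fin_two]; simpa using hΔ
  have hPc : ∀ a b, P a b = f 0 * g a b 0 + f 1 * g a b 1 := fun a b => by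
    simp [hPdef]
  have hQc : ∀ a b, u a * v b = f' 0 * g a b 0 + f' 1 * g a b 1 := fun a b => by
    rw [← huv]; simp [hQdef]
  have k : ∀ x j, G⁻¹ x 0 * G 0 j + G⁻¹ x 1 * G 1 j = (1 : Matrix (Fin 2) (Fin 2) ℂ) x j := by
    intro x j
    rw [← hGG, Matrix.mul_apply, Fin.sum_univ_two]
  have ku : ∀ x, G⁻¹ x 0 * u 0 + G⁻¹ x 1 * u 1 = (1 : Matrix (Fin 2) (Fin 2) ℂ) x 0 := by
    intro x
    rw [← k x 0, ← hw0, ← hw1]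
    congr 2 <;> simp [hG, Matrix.mul_apply]
  have ky : ∀ x, G⁻¹ x 0 * (P 0 0 * y 0 + P 0 1 * y 1) + G⁻¹ x 1 * (P 1 0 * y 0 + P 1 1 * y 1)
      = (1 : Matrix (Fin 2) (Fin 2) ℂ) x 1 := by
    intro x
    rw [← k x 1]
    congr 2 <;> simp [hG, Matrix.mul_apply]
  intro x t z
  have z0 : ∀ B : Fin 2 → ℂ, ∑ a, ∑ b, ∑ c, G⁻¹ x a * B b * f c * g a b c =
      ∑ a, G⁻¹ x a * (P a 0 * B 0 + P a 1 * B 1) := by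
    intro B; simp only [Fin.sum_univ_two, hPc]; ring
  have z1 : ∀ B : Fin 2 → ℂ, ∑ a, ∑ b, ∑ c, G⁻¹ x a * B b * f' c * g a b c =
      ∑ a, G⁻¹ x a * u a * (v 0 * B 0 + v 1 * B 1) := by
    intro B
    simp only [Fin.sum_univ_two]
    linear_combination -G⁻¹ x 0 * B 0 * hQc 0 0 - G⁻¹ x 0 * B 1 * hQc 0 1
      - G⁻¹ x 1 * B 0 * hQc 1 0 - G⁻¹ x 1 * B 1 * hQc 1 1
  have r0 : ∀ p q : Fin 2 → ℂ, (!![p 0, p 1; q 0, q 1] : Matrix (Fin 2) (Fin 2) ℂ) 0 = p := by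
    intro p q; ext i; fin_cases i <;> rfl
  have r1 : ∀ p q : Fin 2 → ℂ, (!![p 0, p 1; q 0, q 1] : Matrix (Fin 2) (Fin 2) ℂ) 1 = q := by
    intro p q; ext i; fin_cases i <;> rfl
  rcases fin2 z with rfl | rfl <;> rcases fin2 t with rfl | rfl <;> simp only [r0, r1, z0, z1]
  · rw [Fin.sum_univ_two, ky]
    rcases fin2 x with rfl | rfl <;> simp [Wtensor, Fin.sum_univ_three]
  · rw [Fin.sum_univ_two, hw0, hw1, ku]
    rcases fin2 x with rfl | rfl <;> simp [Wtensor, Fin.sum_univ_three]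
  · rw [hy, Fin.sum_univ_two, mul_one, mul_one, ku]
    rcases fin2 x with rfl | rfl <;> simp [Wtensor, Fin.sum_univ_three]
  · rw [hvw, Fin.sum_univ_two]
    rcases fin2 x with rfl | rfl <;> simp [Wtensor, Fin.sum_univ_three]

lemma det_zero3 (S : Fin 2 → Fin 2 → Fin 2 → ℂ)
    (h : ∀ f : Fin 2 → ℂ, (Matrix.of fun a b => ∑ c, f c * S a b c).det = 0) :
    S 0 0 0 * S 1 1 0 = S 0 1 0 * S 1 0 0 ∧ S 0 0 1 * S 1 1 1 = S 0 1 1 * S 1 0 1 ∧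
    S 0 0 0 * S 1 1 1 + S 0 0 1 * S 1 1 0 = S 0 1 0 * S 1 0 1 + S 0 1 1 * S 1 0 0 := by
  have h1 := h ![1, 0]
  have h2 := h ![0, 1]
  have h3 := h ![1, 1]
  simp [Matrix.det_fin_two] at h1 h2 h3
  refine ⟨?_, ?_, ?_⟩
  · linear_combination h1
  · linear_combination h2
  · linear_combination h3 - h1 - h2

lemma R1 (g : Fin 2 → Fin 2 → Fin 2 → ℂ)
    (h1 : ∀ f : Fin 2 → ℂ, (Matrix.of fun a b => ∑ c, f c * g a b c).det = 0)
    (h2 : ∀ f : Fin 2 → ℂ, (Matrix.of fun a b => ∑ c, f c * g c b a).det = 0)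
    (h3 : ∀ f : Fin 2 → ℂ, (Matrix.of fun a b => ∑ c, f c * g a c b).det = 0)
    (x y z : Fin 2) (h0 : g x y z ≠ 0) :
    ∃ p q w : Fin 2 → ℂ, ∀ a b c, g a b c = p a * q b * w c := by
  obtain ⟨a1, a2, a3⟩ := det_zero3 (fun a b c => g a b c) h1
  obtain ⟨b1, b2, b3⟩ := det_zero3 (fun a b c => g c b a) h2
  obtain ⟨c1, c2, c3⟩ := det_zero3 (fun a b c => g a c b) h3
  have e1 : g 0 0 0 * g 1 1 1 = g 1 0 0 * g 0 1 1 := by grind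
  have e2 : g 0 0 0 * g 1 1 1 = g 0 1 0 * g 1 0 1 := by grind
  have e3 : g 0 0 0 * g 1 1 1 = g 0 0 1 * g 1 1 0 := by grind
  have k1 : ∀ a b c a' b' c', g a b c * g a' b' c' = g a' b c * g a b' c' := by
    intro a b c a' b' c'
    rcases fin2 a with rfl | rfl <;> rcases fin2 b with rfl | rfl <;> rcases fin2 c with rfl | rfl <;>
    rcases fin2 a' with rfl | rfl <;> rcases fin2 b' with rfl | rfl <;> rcases fin2 c' with rfl | rfl <;>
    grind
  have k2 : ∀ a b c b' c', g a b c * g a b' c' = g a b' c * g a b c' := by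
    intro a b c b' c'
    rcases fin2 a with rfl | rfl <;> rcases fin2 b with rfl | rfl <;> rcases fin2 c with rfl | rfl <;>
    rcases fin2 b' with rfl | rfl <;> rcases fin2 c' with rfl | rfl <;>
    grind
  refine ⟨fun a => g a y z, fun b => g x b z / g x y z, fun c => g x y c / g x y z, fun a b c => ?_⟩
  field_simp
  have e := k1 a b c x y z
  have ee := k2 x b c y z
  linear_combination g x y z * e + g a y z * ee

/-- Explicit decomposition into `r` simple tensors. -/
def D1 (s : (Fin 3 → Fin 2) → ℂ) (r : ℕ) : Prop :=
  ∃ v : Fin r → Fin 3 → Fin 2 → ℂ, ∀ x, s x = ∑ j, ∏ i, v j i (x i)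

/-- Some contraction to a matrix is invertible. -/
def Con (s : (Fin 3 → Fin 2) → ℂ) : Prop :=
  ∃ (σ : Equiv.Perm (Fin 3)) (f : Fin 2 → ℂ),
    (Matrix.of fun a b => ∑ c, f c * s (fun i => ![a, b, c] (σ i))).det ≠ 0

lemma prodσ (σ : Equiv.Perm (Fin 3)) (G : Fin 3 → Fin 2 → ℂ) (a b c : Fin 2) :
    ∏ i, G i (![a, b, c] (σ i)) = G (σ.symm 0) a * G (σ.symm 1) b * G (σ.symm 2) c := by
  rw [← Equiv.prod_comp σ.symm]
  simp [Fin.prod_univ_three]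

lemma unσ (σ : Equiv.Perm (Fin 3)) (x : Fin 3 → Fin 2) :
    (fun i => ![x (σ.symm 0), x (σ.symm 1), x (σ.symm 2)] (σ i)) = x := by
  have : ![x (σ.symm 0), x (σ.symm 1), x (σ.symm 2)] = fun k => x (σ.symm k) := by
    ext k; fin_cases k <;> rfl
  ext i; rw [this]; simp

lemma d1_of (s : (Fin 3 → Fin 2) → ℂ) (σ : Equiv.Perm (Fin 3)) (r : ℕ)
    (p q w : Fin r → Fin 2 → ℂ)
    (h : ∀ a b c, s (fun i => ![a, b, c] (σ i)) = ∑ j, p j a * q j b * w j c) : D1 s r := by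
  refine ⟨fun j i => ![p j, q j, w j] (σ i), fun x => ?_⟩
  conv_lhs => rw [← unσ σ x]
  rw [h]
  refine Finset.sum_congr rfl fun j _ => ?_
  rw [← Equiv.prod_comp σ.symm]
  simp [Fin.prod_univ_three]

lemma sum3 (G : (Fin 3 → Fin 2) → ℂ) : ∑ y, G y = ∑ a, ∑ b, ∑ c, G ![a, b, c] := by
  rw [← Fintype.sum_prod_type', ← Fintype.sum_prod_type']
  refine (Fintype.sum_bijective (fun p : (Fin 2 × Fin 2) × Fin 2 => ![p.1.1, p.1.2, p.2]) ?_ _ _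
    fun _ => rfl).symm
  constructor
  · rintro ⟨⟨a, b⟩, c⟩ ⟨⟨a', b'⟩, c'⟩ h
    have h0 := congrFun h 0
    have h1 := congrFun h 1
    have h2 := congrFun h 2
    simp at h0 h1 h2
    simp [h0, h1, h2]
  · intro y
    exact ⟨((y 0, y 1), y 2), by ext i; fin_cases i <;> rfl⟩

lemma sum3σ (σ : Equiv.Perm (Fin 3)) (G : (Fin 3 → Fin 2) → ℂ) :
    ∑ y, G y = ∑ a, ∑ b, ∑ c, G (fun i => ![a, b, c] (σ i)) := by
  rw [← sum3 (fun y => G (fun i => y (σ i)))]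
  exact (Equiv.sum_comp (Equiv.arrowCongr σ.symm (Equiv.refl (Fin 2))) G).symm

lemma cls (s : (Fin 3 → Fin 2) → ℂ) :
    s = 0 ∨ D1 s 1 ∨ (D1 s 2 ∧ Con s) ∨ (D1 s 3 ∧ IsoW3 s) := by
  by_cases hC : Con s
  · right; right
    obtain ⟨σ, f, hf⟩ := id hC
    rcases L _ f hf with ⟨p, q, w, h⟩ | ⟨⟨p, q, w, h⟩, A, B, C, hA, hB, hC, h'⟩
    · exact Or.inl ⟨d1_of s σ 2 p q w h, hC⟩
    · refine Or.inr ⟨d1_of s σ 3 p q w h, fun i => ![A, B, C] (σ i), ?_, ?_⟩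
      · intro i
        have hk : ∀ k : Fin 3, IsUnit (![A, B, C] k).det := by
          intro k
          fin_cases k
          · exact hA
          · exact hB
          · exact hC
        exact hk (σ i)
      · intro x
        rw [sum3σ σ]
        have hW : Wtensor ℂ 3 x = Wtensor ℂ 3 ![x (σ.symm 0), x (σ.symm 1), x (σ.symm 2)] := by
          unfold Wtensor
          rw [← Equiv.sum_comp σ.symm]
          simp [Fin.sum_univ_three]
        rw [hW, ← h']
        refine Finset.sum_congr rfl fun a _ => Finset.sum_congr rfl fun b _ =>
          Finset.sum_congr rfl fun c _ => ?_
        rw [prodσ σ (fun i => ![A, B, C] (σ i) (x i))]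
        simp only [Equiv.apply_symm_apply]
        rfl
  · by_cases h0 : s = 0
    · exact Or.inl h0
    right; left
    obtain ⟨x, hx⟩ := Function.ne_iff.1 h0
    unfold Con at hC
    push Not at hC
    have hv : ∀ y : Fin 3 → Fin 2, ![y 0, y 1, y 2] = y := by
      intro y; ext i; fin_cases i <;> rfl
    obtain ⟨p, q, w, h⟩ := R1 (fun a b c => s ![a, b, c])
      (fun f => by simpa using hC 1 f)
      (fun f => by
        rw [← hC (Equiv.swap 0 2) f]; congr 3; ext a b
        refine Finset.sum_congr rfl fun c _ => ?_
        congr 2; ext i; fin_cases i <;> rfl)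
      (fun f => by
        rw [← hC (Equiv.swap 1 2) f]; congr 3; ext a b
        refine Finset.sum_congr rfl fun c _ => ?_
        congr 2; ext i; fin_cases i <;> rfl)
      (x 0) (x 1) (x 2) (by simpa [hv] using hx)
    exact d1_of s 1 1 (fun _ => p) (fun _ => q) (fun _ => w) (fun a b c => by simpa using h a b c)

lemma tRank_le {s : (Fin 3 → Fin 2) → ℂ} {r : ℕ} (h : D1 s r) : tRank s ≤ r := Nat.sInf_le h

lemma tRank_zero : tRank (0 : (Fin 3 → Fin 2) → ℂ) = 0 :=
  Nat.le_zero.1 (tRank_le ⟨fun j => j.elim0, fun x => by simp⟩)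

/-- Explicit decomposition of the product. -/
def Dec (s t : (Fin 3 → Fin 2) → ℂ) (r : ℕ) : Prop :=
  ∃ U V : Fin r → Fin 3 → Fin 2 → ℂ, ∀ a b,
    s a * t b = ∑ j, (∏ i, U j i (a i)) * ∏ i, V j i (b i)

lemma Dec.symm {s t : (Fin 3 → Fin 2) → ℂ} {r : ℕ} (h : Dec s t r) : Dec t s r := by
  obtain ⟨U, V, h⟩ := h
  exact ⟨V, U, fun a b => by
    rw [mul_comm, h]; exact Finset.sum_congr rfl fun _ _ => mul_comm _ _⟩

lemma Dec.one {s t : (Fin 3 → Fin 2) → ℂ} {r : ℕ} (h : Dec s t r) (hs : s ≠ 0) : D1 t r := by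
  obtain ⟨U, V, h⟩ := h
  obtain ⟨x, hx⟩ := Function.ne_iff.1 hs
  simp only [Pi.zero_apply] at hx
  refine ⟨fun j i c => (if i = 0 then (∏ k, U j k (x k)) / s x else 1) * V j i c, fun b => ?_⟩
  have e : t b = (s x)⁻¹ * (s x * t b) := by field_simp
  rw [e, h, Finset.mul_sum]
  refine Finset.sum_congr rfl fun j _ => ?_
  rw [Finset.prod_mul_distrib]
  simp
  ring

lemma Dec.con {s t : (Fin 3 → Fin 2) → ℂ} {r : ℕ} (h : Dec s t r) (hs : Con s) :
    ∃ (M : Matrix (Fin 2) (Fin 2) ℂ) (X Y : Fin r → Fin 2 → ℂ) (V : Fin r → Fin 3 → Fin 2 → ℂ),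
      M.det ≠ 0 ∧ ∀ a b y, M a b * t y = ∑ j, X j a * Y j b * ∏ i, V j i (y i) := by
  obtain ⟨U, V, h⟩ := h
  obtain ⟨σ, f, hf⟩ := hs
  refine ⟨_, fun j a => (∑ c, f c * U j (σ.symm 2) c) * U j (σ.symm 0) a,
    fun j => U j (σ.symm 1), V, hf, fun a b y => ?_⟩
  simp only [Matrix.of_apply, Finset.sum_mul, mul_assoc, h]
  simp only [prodσ, Finset.mul_sum]
  rw [Finset.sum_comm]
  exact Finset.sum_congr rfl fun j _ => Finset.sum_congr rfl fun c _ => by ring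

lemma lower (s t : (Fin 3 → Fin 2) → ℂ) (hs : ¬ IsoW3 s) (r : ℕ) (h : Dec s t r) :
    tRank s * tRank t ≤ r := by
  by_cases hs0 : s = 0
  · rw [hs0, tRank_zero]; simp
  by_cases ht0 : t = 0
  · rw [ht0, tRank_zero]; simp
  have h1 := tRank_le (h.one hs0)
  have h2 := tRank_le (h.symm.one ht0)
  rcases cls s with c | c | ⟨c, cs⟩ | c
  · exact absurd c hs0
  · have := tRank_le c; nlinarith
  · have c2 := tRank_le c
    rcases cls t with d | d | ⟨d, ds⟩ | ⟨d, ds⟩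
    · exact absurd d ht0
    · have := tRank_le d; nlinarith
    · have d2 := tRank_le d
      suffices 4 ≤ r by nlinarith
      obtain ⟨M, X, Y, V, hM, hh⟩ := h.con cs
      obtain ⟨σ, f, hf⟩ := ds
      refine K22 r M _ hM hf X Y (fun j a => (∑ c, f c * V j (σ.symm 2) c) * V j (σ.symm 0) a)
        (fun j => V j (σ.symm 1)) fun a b a' b' => ?_
      simp only [Matrix.of_apply, Finset.mul_sum, mul_left_comm (M a b), hh]
      simp only [prodσ, Finset.mul_sum, Finset.sum_mul]
      rw [Finset.sum_comm]
      exact Finset.sum_congr rfl fun j _ => Finset.sum_congr rfl fun c _ => by ring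
    · have d2 := tRank_le d
      suffices 6 ≤ r by nlinarith
      obtain ⟨M, X, Y, V, hM, hh⟩ := h.con cs
      obtain ⟨A, -, hA⟩ := ds
      refine KW r M hM X Y (fun j x => ∑ y, A 0 x y * V j 0 y) (fun j x => ∑ y, A 1 x y * V j 1 y)
        (fun j x => ∑ y, A 2 x y * V j 2 y) fun a b a' b' c' => ?_
      rw [← hA, Finset.mul_sum]
      simp only [mul_left_comm (M a b), hh]
      simp only [Finset.mul_sum (Finset.univ : Finset (Fin r))]
      rw [Finset.sum_comm]
      refine Finset.sum_congr rfl fun j _ => ?_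
      rw [sum3]
      simp [Fin.prod_univ_three, Fin.sum_univ_two]
      ring
  · exact absurd c.2 hs

lemma exD1 (s : (Fin 3 → Fin 2) → ℂ) : ∃ r, D1 s r := by
  rcases cls s with c | c | c | c
  · exact ⟨0, fun j => j.elim0, fun x => by simp [c]⟩
  · exact ⟨_, c⟩
  · exact ⟨_, c.1⟩
  · exact ⟨_, c.1⟩

lemma dec_tRank (s t : (Fin 3 → Fin 2) → ℂ) : Dec s t (tRank (tProd s t)) := by
  have hne : {r | ∃ v : Fin r → ∀ i : Fin 3 ⊕ Fin 3,
      Sum.elim (fun _ : Fin 3 => Fin 2) (fun _ : Fin 3 => Fin 2) i → ℂ,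
      ∀ x, tProd s t x = ∑ j, ∏ i, v j i (x i)}.Nonempty := by
    obtain ⟨m, v, hv⟩ := exD1 s
    obtain ⟨n, w, hw⟩ := exD1 t
    refine ⟨m * n, fun j i => match i with
      | Sum.inl i => v (finProdFinEquiv.symm j).1 i
      | Sum.inr i => w (finProdFinEquiv.symm j).2 i, fun x => ?_⟩
    simp only [Fintype.prod_sum_type]
    rw [← Equiv.sum_comp finProdFinEquiv]
    simp only [Equiv.symm_apply_apply, Fintype.sum_prod_type, tProd]
    exact (congrArg₂ (· * ·) (hv fun i => x (Sum.inl i)) (hw fun i => x (Sum.inr i))).trans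
      (Finset.sum_mul_sum _ _ _ _)
  obtain ⟨v, hv⟩ := Nat.sInf_mem hne
  refine ⟨fun j i => v j (Sum.inl i), fun j i => v j (Sum.inr i), fun a b => ?_⟩
  have := hv (fun i => match i with
    | Sum.inl i => a i
    | Sum.inr i => b i)
  simp only [Fintype.prod_sum_type] at this
  exact this

end W3Proof

/-- if `s, t ∈ ℂ²⊗ℂ²⊗ℂ²` satisfy `rank(s ⊗ t) < rank(s)·rank(t)`, then
both `s` and `t` are isomorphic to `W₃`. -/
theorem not_mult_implies_W3 (s t : (Fin 3 → Fin 2) → ℂ)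
    (h : tRank (tProd s t) < tRank s * tRank t) :
    IsoW3 s ∧ IsoW3 t := by
  have hd := W3Proof.dec_tRank s t
  constructor
  · by_contra hs
    exact absurd (W3Proof.lower s t hs _ hd) (by omega)
  · by_contra ht
    have := W3Proof.lower t s ht _ hd.symm
    rw [mul_comm] at this
    omega
end
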